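/- arXiv:0705.2078 — 6 statements merged into one kernel-verified Lean document; each statement's English description precedes it below -/
import Mathlib

section
/- Let g ≥ 1 and let σ, σ′ ∈ Γ_g(p₂). Then the (g,2g)-entry of the product satisfies (σσ′)_{g,2g} ≡ σ_{g,2g} + σ′_{g,2g} (mod 4). -/
open Matrix

/-- The subgroup `Γ_g(p₂) ⊆ Sp(2g,ℤ)`, as a set: symplectic integer matrices fixing the
basis vector `e_{2g}` (the class `B_g`, index `Sum.inr ⟨g-1,_⟩`) modulo 2. -/
def GammaP2Set (g : ℕ) (hg : 1 ≤ g) : Set (Matrix (Fin g ⊕ Fin g) (Fin g ⊕ Fin g) ℤ) :=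
  {σ | σ ∈ Matrix.symplecticGroup (Fin g) ℤ ∧
    ∀ i : Fin g ⊕ Fin g,
      σ i (Sum.inr ⟨g - 1, by omega⟩) ≡
        (1 : Matrix (Fin g ⊕ Fin g) (Fin g ⊕ Fin g) ℤ) i (Sum.inr ⟨g - 1, by omega⟩) [ZMOD 2]}

theorem row_even {l : Type*} [Fintype l] [DecidableEq l] (a : l)
    (σ : Matrix (l ⊕ l) (l ⊕ l) ℤ) (h : σ ∈ Matrix.symplecticGroup l ℤ)
    (hc : ∀ i, σ i (Sum.inr a) ≡ (1 : Matrix (l ⊕ l) (l ⊕ l) ℤ) i (Sum.inr a) [ZMOD 2])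
    (j : l ⊕ l) :
    σ (Sum.inl a) j ≡ (1 : Matrix (l ⊕ l) (l ⊕ l) ℤ) (Sum.inl a) j [ZMOD 2] := by
  rw [SymplecticGroup.mem_iff'] at h
  have h1 := congrFun (congrFun h j) (Sum.inr a)
  rw [Matrix.mul_apply] at h1
  have h2 : ∀ x, ((σ x (Sum.inr a) : ℤ) : ZMod 2) = if x = Sum.inr a then 1 else 0 := by
    intro x
    have := (ZMod.intCast_eq_intCast_iff _ _ 2).2 (hc x)
    rw [this, Matrix.one_apply]
    split_ifs <;> simp
  have h3 := congrArg (Int.cast : ℤ → ZMod 2) h1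
  push_cast at h3
  simp only [h2, mul_ite, mul_one, mul_zero, Finset.sum_ite_eq', Finset.sum_ite_eq,
    Finset.mem_univ, if_true] at h3
  have h4 : (σᵀ * Matrix.J l ℤ) j (Sum.inr a) = - σ (Sum.inl a) j := by
    rw [Matrix.mul_apply]
    simp [Matrix.J, Matrix.one_apply]
  rw [h4] at h3
  apply (ZMod.intCast_eq_intCast_iff _ _ 2).1
  have h5 : Matrix.J l ℤ j (Sum.inr a) = - (1 : Matrix (l ⊕ l) (l ⊕ l) ℤ) (Sum.inl a) j := by
    cases j with
    | inl j => simp [Matrix.J, Matrix.one_apply, eq_comm]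
    | inr j => simp [Matrix.J]
  rw [h5] at h3
  push_cast at h3
  exact neg_injective h3

theorem mul_entry {l : Type*} [Fintype l] [DecidableEq l] (a : l)
    (σ τ : Matrix (l ⊕ l) (l ⊕ l) ℤ) (h : σ ∈ Matrix.symplecticGroup l ℤ)
    (hc : ∀ i, σ i (Sum.inr a) ≡ (1 : Matrix (l ⊕ l) (l ⊕ l) ℤ) i (Sum.inr a) [ZMOD 2])
    (hd : ∀ i, τ i (Sum.inr a) ≡ (1 : Matrix (l ⊕ l) (l ⊕ l) ℤ) i (Sum.inr a) [ZMOD 2]) :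
    (σ * τ) (Sum.inl a) (Sum.inr a) ≡ σ (Sum.inl a) (Sum.inr a) + τ (Sum.inl a) (Sum.inr a)
      [ZMOD 4] := by
  have hr := row_even a σ h hc
  have key : ∀ k, (4 : ℤ) ∣ (σ (Sum.inl a) k - (1 : Matrix (l ⊕ l) (l ⊕ l) ℤ) (Sum.inl a) k) *
      (τ k (Sum.inr a) - (1 : Matrix (l ⊕ l) (l ⊕ l) ℤ) k (Sum.inr a)) := fun k =>
    mul_dvd_mul (a := (2 : ℤ)) (c := 2) (hr k).symm.dvd (hd k).symm.dvd
  have hs : (4 : ℤ) ∣ ((σ - 1) * (τ - 1)) (Sum.inl a) (Sum.inr a) := by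
    rw [Matrix.mul_apply]
    exact Finset.dvd_sum fun k _ => key k
  have e : (σ - 1) * (τ - 1) = σ * τ - (σ + τ) + 1 := by noncomm_ring
  rw [e] at hs
  apply Int.ModEq.symm
  apply Int.modEq_of_dvd
  simpa using hs

/-- for `σ, σ′ ∈ Γ_g(p₂)`, the `(g,2g)`-entry of `σσ′` is congruent to
`σ_{g,2g} + σ′_{g,2g}` modulo 4. -/
theorem stmt1 (g : ℕ) (hg : 1 ≤ g)
    (σ σ' : Matrix (Fin g ⊕ Fin g) (Fin g ⊕ Fin g) ℤ)
    (hσ : σ ∈ GammaP2Set g hg) (hσ' : σ' ∈ GammaP2Set g hg) :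
    (σ * σ') (Sum.inl ⟨g - 1, by omega⟩) (Sum.inr ⟨g - 1, by omega⟩) ≡
      σ (Sum.inl ⟨g - 1, by omega⟩) (Sum.inr ⟨g - 1, by omega⟩) +
      σ' (Sum.inl ⟨g - 1, by omega⟩) (Sum.inr ⟨g - 1, by omega⟩) [ZMOD 4] := by
  exact mul_entry _ σ σ' hσ.1 hσ.2 hσ'.2
end

section
/- Let g ≥ 1. Every σ ∈ Γ_g(p₂) can be written as σ = σ₀γ with σ₀ ∈ G_S and γ ∈ Γ_g[2]; that is, Γ_g(p₂) = G_S · Γ_g[2]. Equivalently, for every σ ∈ Γ_g(p₂) there exists σ₀ ∈ G_S with σ₀ ≡ σ (mod 2). -/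
open Matrix

/-- The subgroup `G_S ⊆ Sp(2g,ℤ)`, as a set: symplectic matrices whose `g`-th row and
`2g`-th column agree exactly with those of the identity matrix. -/
def GSSet (g : ℕ) (hg : 1 ≤ g) : Set (Matrix (Fin g ⊕ Fin g) (Fin g ⊕ Fin g) ℤ) :=
  {σ | σ ∈ Matrix.symplecticGroup (Fin g) ℤ ∧
    (∀ j : Fin g ⊕ Fin g,
      σ (Sum.inl ⟨g - 1, by omega⟩) j =
        (1 : Matrix (Fin g ⊕ Fin g) (Fin g ⊕ Fin g) ℤ) (Sum.inl ⟨g - 1, by omega⟩) j) ∧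
    (∀ i : Fin g ⊕ Fin g,
      σ i (Sum.inr ⟨g - 1, by omega⟩) =
        (1 : Matrix (Fin g ⊕ Fin g) (Fin g ⊕ Fin g) ℤ) i (Sum.inr ⟨g - 1, by omega⟩))}

/-- The level 2 principal congruence subgroup `Γ_g[2] ⊆ Sp(2g,ℤ)`, as a set: symplectic
matrices congruent to the identity modulo 2 (the kernel of mod 2 reduction). -/
def Level2Set (g : ℕ) : Set (Matrix (Fin g ⊕ Fin g) (Fin g ⊕ Fin g) ℤ) :=
  {σ | σ ∈ Matrix.symplecticGroup (Fin g) ℤ ∧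
    ∀ i j : Fin g ⊕ Fin g,
      σ i j ≡ (1 : Matrix (Fin g ⊕ Fin g) (Fin g ⊕ Fin g) ℤ) i j [ZMOD 2]}

section helpers
variable {l R : Type*} [Fintype l] [DecidableEq l] [CommRing R]

/-- The symplectic form attached to `J`. -/
def sympB (x y : l ⊕ l → R) : R := x ⬝ᵥ (Matrix.J l R *ᵥ y)

lemma sympB_eq (x y : l ⊕ l → R) :
    sympB x y = ∑ i, (x (Sum.inr i) * y (Sum.inl i) - x (Sum.inl i) * y (Sum.inr i)) := by
  unfold sympB Matrix.J
  rw [← Sum.elim_comp_inl_inr y, fromBlocks_mulVec]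
  simp [dotProduct, Finset.sum_sub_distrib, neg_mulVec]
  ring

lemma sympB_self (x : l ⊕ l → R) : sympB x x = 0 := by
  rw [sympB_eq]; apply Finset.sum_eq_zero; intros; ring

lemma sympB_swap (x y : l ⊕ l → R) : sympB x y = - sympB y x := by
  rw [sympB_eq, sympB_eq, ← Finset.sum_neg_distrib]; apply Finset.sum_congr rfl; intros; ring

lemma sympB_add_left (x y z : l ⊕ l → R) : sympB (x + y) z = sympB x z + sympB y z := by
  simp [sympB, add_dotProduct]

lemma sympB_add_right (x y z : l ⊕ l → R) : sympB x (y + z) = sympB x y + sympB x z := by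
  simp [sympB, mulVec_add, dotProduct_add]

lemma sympB_smul_left (c : R) (x y : l ⊕ l → R) : sympB (c • x) y = c * sympB x y := by
  simp [sympB]

lemma sympB_smul_right (c : R) (x y : l ⊕ l → R) : sympB x (c • y) = c * sympB x y := by
  simp [sympB, mulVec_smul]

lemma sympB_inl (k : l) (y : l ⊕ l → R) :
    sympB (Pi.single (Sum.inl k) 1) y = - y (Sum.inr k) := by
  rw [sympB_eq]; simp [Pi.single_apply]

lemma sympB_inr (k : l) (y : l ⊕ l → R) :
    sympB (Pi.single (Sum.inr k) 1) y = y (Sum.inl k) := by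
  rw [sympB_eq]; simp [Pi.single_apply]

lemma sympB_mulVec {M : Matrix (l ⊕ l) (l ⊕ l) R} (hM : M ∈ symplecticGroup l R)
    (x y : l ⊕ l → R) : sympB (M *ᵥ x) (M *ᵥ y) = sympB x y := by
  have h := SymplecticGroup.mem_iff'.1 hM
  unfold sympB
  rw [← vecMul_transpose, ← dotProduct_mulVec, mulVec_mulVec, mulVec_mulVec, h]

lemma symp_of_sympB {M : Matrix (l ⊕ l) (l ⊕ l) R}
    (h : ∀ x y, sympB (M *ᵥ x) (M *ᵥ y) = sympB x y) : M ∈ symplecticGroup l R := by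
  rw [SymplecticGroup.mem_iff']
  ext i j
  have := h (Pi.single i 1) (Pi.single j 1)
  unfold sympB at this
  rw [← vecMul_transpose, ← dotProduct_mulVec, mulVec_mulVec, mulVec_mulVec] at this
  simpa using this

/-- The symplectic transvection along `v`. -/
def sympT (v : l ⊕ l → R) : Matrix (l ⊕ l) (l ⊕ l) R := 1 + vecMulVec v (Matrix.J l R *ᵥ v)

lemma sympT_mulVec (v x : l ⊕ l → R) : sympT v *ᵥ x = x + sympB x v • v := by
  unfold sympT sympB
  rw [add_mulVec, one_mulVec, vecMulVec_mulVec, dotProduct_comm]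
  simp

lemma sympT_mem (v : l ⊕ l → R) : sympT v ∈ symplecticGroup l R := by
  apply symp_of_sympB
  intro x y
  simp only [sympT_mulVec, sympB_add_left, sympB_add_right, sympB_smul_left, sympB_smul_right,
    sympB_self]
  rw [sympB_swap v y]; ring

lemma sympB_nondeg {u : l ⊕ l → R} (hu : u ≠ 0) : ∃ x, sympB x u ≠ 0 := by
  by_contra! h
  apply hu
  ext (i | i)
  · simpa [sympB_inr] using h (Pi.single (Sum.inr i) 1)
  · simpa [sympB_inl] using h (Pi.single (Sum.inl i) 1)

end helpers

section lifting
variable {l : Type*} [Fintype l] [DecidableEq l]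

/-- Liftability of a mod 2 matrix to an integral symplectic matrix fixing `e_k`. -/
def Liftable (k : l) (M : Matrix (l ⊕ l) (l ⊕ l) (ZMod 2)) : Prop :=
  ∃ S ∈ symplecticGroup l ℤ,
    S *ᵥ (Pi.single (Sum.inr k) 1) = Pi.single (Sum.inr k) 1 ∧ S.map (Int.castRingHom (ZMod 2)) = M

lemma Liftable.one (k : l) : Liftable k 1 :=
  ⟨1, one_mem _, one_mulVec _, by simp⟩

lemma Liftable.mul {k : l} {M N : Matrix (l ⊕ l) (l ⊕ l) (ZMod 2)}
    (hM : Liftable k M) (hN : Liftable k N) : Liftable k (M * N) := by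
  obtain ⟨S, hS, hS1, rfl⟩ := hM
  obtain ⟨T, hT, hT1, rfl⟩ := hN
  exact ⟨S * T, mul_mem hS hT, by rw [← mulVec_mulVec, hT1, hS1], by rw [Matrix.map_mul]⟩

lemma Liftable.T {k : l} {v : l ⊕ l → ZMod 2} (hv : sympB (Pi.single (Sum.inr k) 1) v = 0) :
    Liftable k (sympT v) := by
  rw [sympB_inr] at hv
  refine ⟨sympT (fun i => ((v i).val : ℤ)), sympT_mem _, ?_, ?_⟩
  · rw [sympT_mulVec, sympB_inr, hv]; simp
  · have h1 : (Int.castRingHom (ZMod 2)) ∘ (fun i => ((v i).val : ℤ)) = v := by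
      ext i; simp
    have h2 : (Int.castRingHom (ZMod 2)) ∘ (Matrix.J l ℤ *ᵥ fun i => ((v i).val : ℤ))
        = Matrix.J l (ZMod 2) *ᵥ v := by
      ext i
      have := RingHom.map_mulVec (Int.castRingHom (ZMod 2)) (Matrix.J l ℤ)
        (fun i => ((v i).val : ℤ)) i
      rw [h1, Matrix.map_J] at this
      exact this
    unfold sympT
    ext i j
    have h1i := congrFun h1 i
    have h2j := congrFun h2 j
    simp only [Function.comp] at h1i h2j
    rw [Matrix.map_apply, Matrix.add_apply, Matrix.add_apply, vecMulVec_apply, vecMulVec_apply,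
      map_add, map_mul, h1i, h2j]
    congr 1
    simp [Matrix.one_apply]

lemma sympT_sq (v : l ⊕ l → ZMod 2) : sympT v * sympT v = 1 := by
  apply Matrix.ext_of_mulVec_single
  intro i
  rw [← mulVec_mulVec, sympT_mulVec, sympT_mulVec, one_mulVec, sympB_add_left, sympB_smul_left,
    sympB_self, mul_zero, add_zero, add_assoc, ← add_smul, CharTwo.add_self_eq_zero, zero_smul,
    add_zero]

/-- A residual vector is orthogonal to the fixed vectors. -/
lemma resid_orth {M : Matrix (l ⊕ l) (l ⊕ l) (ZMod 2)} (hM : M ∈ symplecticGroup l (ZMod 2))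
    {y : l ⊕ l → ZMod 2} (hy : M *ᵥ y = y) (x : l ⊕ l → ZMod 2) :
    sympB y (x + M *ᵥ x) = 0 := by
  have := sympB_mulVec hM y x
  rw [hy] at this
  rw [sympB_add_right, this, CharTwo.add_self_eq_zero]

lemma vec2_add_self (x : l ⊕ l → ZMod 2) : x + x = 0 := by
  ext i; exact CharTwo.add_self_eq_zero (x i)

lemma zmod2_ne {a : ZMod 2} (h : a ≠ 0) : a = 1 := by revert a; decide

lemma liftable_aux (k : l) (N : ℕ) : ∀ M ∈ symplecticGroup l (ZMod 2),
    M *ᵥ (Pi.single (Sum.inr k) 1) = Pi.single (Sum.inr k) 1 →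
    {x | M *ᵥ x ≠ x}.ncard ≤ N → Liftable k M := by
  induction N with
  | zero =>
    intro M hM hw hc
    have h0 : {x | M *ᵥ x ≠ x} = ∅ := (Set.ncard_eq_zero (Set.toFinite _)).1 (by omega)
    have : M = 1 := by
      apply Matrix.ext_of_mulVec_single
      intro i
      by_contra h
      have : Pi.single i 1 ∈ {x | M *ᵥ x ≠ x} := by rwa [one_mulVec] at h
      rw [h0] at this
      exact this
    rw [this]; exact Liftable.one k
  | succ N ih =>
    -- the reduction step when some `x` has `⟨x, M x⟩ ≠ 0`
    have key : ∀ M ∈ symplecticGroup l (ZMod 2),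
        M *ᵥ (Pi.single (Sum.inr k) 1) = Pi.single (Sum.inr k) 1 →
        {x | M *ᵥ x ≠ x}.ncard ≤ N + 1 → (∃ x, sympB x (M *ᵥ x) ≠ 0) → Liftable k M := by
      intro M hM hw hc ⟨x, hx⟩
      set v := x + M *ᵥ x with hv
      have hMM : M = sympT v * (sympT v * M) := by rw [← mul_assoc, sympT_sq, one_mul]
      have hfix : ∀ y, M *ᵥ y = y → (sympT v * M) *ᵥ y = y := by
        intro y hy
        rw [← mulVec_mulVec, hy, sympT_mulVec, hv, resid_orth hM hy x, zero_smul, add_zero]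
      have hxf : (sympT v * M) *ᵥ x = x := by
        have h1 : sympT v *ᵥ x = M *ᵥ x := by
          rw [sympT_mulVec, hv, sympB_add_right, sympB_self, zero_add, zmod2_ne hx, one_smul,
            ← add_assoc, vec2_add_self, zero_add]
        rw [← mulVec_mulVec, ← h1, mulVec_mulVec, sympT_sq, one_mulVec]
      have hxn : M *ᵥ x ≠ x := by
        intro h; rw [h, sympB_self] at hx; exact hx rfl
      rw [hMM]
      apply Liftable.mul (Liftable.T (resid_orth hM hw x))
      apply ih _ (mul_mem (sympT_mem v) hM) (hfix _ hw)
      have hlt : {y | (sympT v * M) *ᵥ y ≠ y}.ncard < {y | M *ᵥ y ≠ y}.ncard := by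
        apply Set.ncard_lt_ncard _ (Set.toFinite _)
        refine ⟨fun y hy h => hy (hfix y h), fun h => ?_⟩
        exact h (show x ∈ {y | M *ᵥ y ≠ y} from hxn) hxf
      omega
    intro M hM hw hc
    by_cases hex : ∃ x, sympB x (M *ᵥ x) ≠ 0
    · exact key M hM hw hc hex
    push Not at hex
    by_cases hone : ∀ z, M *ᵥ z = z
    · have : M = 1 := by
        apply Matrix.ext_of_mulVec_single
        intro i
        rw [hone, one_mulVec]
      rw [this]; exact Liftable.one k
    push Not at hone
    obtain ⟨z, hz⟩ := hone
    set u := z + M *ᵥ z with hu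
    have hu0 : u ≠ 0 := by
      intro h
      have h2 : z + (z + M *ᵥ z) = z := by rw [← hu, h, add_zero]
      rw [← add_assoc, vec2_add_self, zero_add] at h2
      exact hz h2
    obtain ⟨x, hx⟩ := sympB_nondeg hu0
    have hMM : M = sympT u * (sympT u * M) := by rw [← mul_assoc, sympT_sq, one_mul]
    have hfix : ∀ y, M *ᵥ y = y → (sympT u * M) *ᵥ y = y := by
      intro y hy
      rw [← mulVec_mulVec, hy, sympT_mulVec, hu, resid_orth hM hy z, zero_smul, add_zero]
    rw [hMM]
    apply Liftable.mul (Liftable.T (resid_orth hM hw z))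
    apply key _ (mul_mem (sympT_mem u) hM) (hfix _ hw)
    · refine le_trans (Set.ncard_le_ncard ?_ (Set.toFinite _)) hc
      exact fun y hy h => hy (hfix y h)
    · refine ⟨x, ?_⟩
      have hpol := hex (x + z)
      rw [mulVec_add, sympB_add_left, sympB_add_right, sympB_add_right, hex x, hex z] at hpol
      have h1 : sympB (M *ᵥ x) u = sympB x u := by
        have h2 := sympB_mulVec hM x z
        have h3 := sympB_swap z (M *ᵥ x)
        rw [hu, sympB_add_right, sympB_add_right, h2]
        rw [h3] at hpol
        have : sympB (M *ᵥ x) z = sympB x (M *ᵥ z) := by linear_combination -hpol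
        rw [this, add_comm]
      rw [← mulVec_mulVec, sympT_mulVec, sympB_add_right, hex x, sympB_smul_right, h1,
        zmod2_ne hx]
      decide

end lifting

lemma map_eq_iff_modEq {g : ℕ} (A B : Matrix (Fin g ⊕ Fin g) (Fin g ⊕ Fin g) ℤ) :
    A.map (Int.castRingHom (ZMod 2)) = B.map (Int.castRingHom (ZMod 2)) ↔
      ∀ i j, A i j ≡ B i j [ZMOD 2] := by
  rw [← Matrix.ext_iff]
  refine forall_congr' fun i => forall_congr' fun j => ?_
  simpa using ZMod.intCast_eq_intCast_iff (A i j) (B i j) 2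

/-- `Γ_g(p₂) = G_S · Γ_g[2]`: every `σ ∈ Γ_g(p₂)` factors as `σ = σ₀γ` with
`σ₀ ∈ G_S` and `γ ∈ Γ_g[2]`; equivalently, there is `σ₀ ∈ G_S` with `σ₀ ≡ σ (mod 2)`. -/
theorem stmt3 (g : ℕ) (hg : 1 ≤ g)
    (σ : Matrix (Fin g ⊕ Fin g) (Fin g ⊕ Fin g) ℤ) (hσ : σ ∈ GammaP2Set g hg) :
    (∃ σ₀ ∈ GSSet g hg, ∃ γ ∈ Level2Set g, σ = σ₀ * γ) ∧
    (∃ σ₀ ∈ GSSet g hg, ∀ i j : Fin g ⊕ Fin g, σ₀ i j ≡ σ i j [ZMOD 2]) := by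
  set k : Fin g := ⟨g - 1, by omega⟩ with hk
  obtain ⟨hs, hcol⟩ := hσ
  have hM : σ.map (Int.castRingHom (ZMod 2)) ∈ symplecticGroup (Fin g) (ZMod 2) := by
    exact SymplecticGroup.map_mem hs (Int.castRingHom (ZMod 2))
  have hw : σ.map (Int.castRingHom (ZMod 2)) *ᵥ (Pi.single (Sum.inr k) 1)
      = Pi.single (Sum.inr k) 1 := by
    ext i
    have h := (ZMod.intCast_eq_intCast_iff _ _ 2).2 (hcol i)
    rw [mulVec_single_one]
    simp only [Matrix.col_apply, Matrix.map_apply, eq_intCast]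
    refine Eq.trans h ?_
    simp [Matrix.one_apply, Pi.single_apply, hk]
  obtain ⟨S, hS, hSe, hSM⟩ := liftable_aux k _ _ hM hw le_rfl
  have hmod := (map_eq_iff_modEq S σ).1 hSM
  have hGS : S ∈ GSSet g hg := by
    refine ⟨hS, fun j => ?_, fun i => ?_⟩
    · have h := sympB_mulVec hS (Pi.single (Sum.inr k) 1) (Pi.single j 1)
      rw [hSe, sympB_inr, sympB_inr, mulVec_single_one] at h
      simp only [Matrix.col_apply] at h
      refine Eq.trans h ?_
      simp [Matrix.one_apply, Pi.single_apply, hk]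
    · have h := congrFun hSe i
      rw [mulVec_single_one] at h
      refine Eq.trans h ?_
      simp [Matrix.one_apply, Pi.single_apply, hk]
  refine ⟨⟨S, hGS, ?_⟩, S, hGS, hmod⟩
  let S' : symplecticGroup (Fin g) ℤ := ⟨S, hS⟩
  let s' : symplecticGroup (Fin g) ℤ := ⟨σ, hs⟩
  have hinv : ((S'⁻¹ : symplecticGroup (Fin g) ℤ) : Matrix _ _ ℤ) * S = 1 :=
    congrArg Subtype.val (inv_mul_cancel S')
  refine ⟨(S'⁻¹ * s' : symplecticGroup (Fin g) ℤ), ⟨Subtype.property _, ?_⟩, ?_⟩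
  · apply (map_eq_iff_modEq _ _).1
    change ((S'⁻¹ : symplecticGroup (Fin g) ℤ).1 * σ).map _ = _
    rw [Matrix.map_mul, ← hSM, ← Matrix.map_mul, hinv]
  · exact (congrArg Subtype.val (mul_inv_cancel_left S' s')).symm
end

section
/- Let g ≥ 4. The abelianization of the group Γ_g(p₂) is a cyclic group of order 2; equivalently H₁(Γ_g(p₂);ℤ) ≅ ℤ/2ℤ. -/
open Matrix

theorem zmodcast {a b : ℤ} (h : ((a : ZMod 2)) = (b : ZMod 2)) : a ≡ b [ZMOD 2] :=
  (ZMod.intCast_eq_intCast_iff a b 2).mp h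

theorem zmodcast' {a b : ℤ} (h : a ≡ b [ZMOD 2]) : ((a : ZMod 2)) = (b : ZMod 2) :=
  (ZMod.intCast_eq_intCast_iff a b 2).mpr h

def GammaP2 (g : ℕ) (hg : 1 ≤ g) : Subgroup (Matrix.symplecticGroup (Fin g) ℤ) where
  carrier := {σ | ∀ i : Fin g ⊕ Fin g,
    (σ : Matrix (Fin g ⊕ Fin g) (Fin g ⊕ Fin g) ℤ) i (Sum.inr ⟨g - 1, by omega⟩) ≡
      (1 : Matrix (Fin g ⊕ Fin g) (Fin g ⊕ Fin g) ℤ) i (Sum.inr ⟨g - 1, by omega⟩) [ZMOD 2]}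
  one_mem' := fun _ => Int.ModEq.refl _
  mul_mem' := by
    intro a b ha hb i
    set bg : Fin g ⊕ Fin g := Sum.inr ⟨g - 1, by omega⟩ with hbg
    apply zmodcast
    have hab : ((a * b : Matrix.symplecticGroup (Fin g) ℤ) : Matrix (Fin g ⊕ Fin g) (Fin g ⊕ Fin g) ℤ) i bg =
        ∑ k, (a : Matrix (Fin g ⊕ Fin g) (Fin g ⊕ Fin g) ℤ) i k *
          (b : Matrix (Fin g ⊕ Fin g) (Fin g ⊕ Fin g) ℤ) k bg := Matrix.mul_apply
    rw [hab]
    push_cast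
    calc (∑ k, ((a : Matrix (Fin g ⊕ Fin g) (Fin g ⊕ Fin g) ℤ) i k : ZMod 2) *
            ((b : Matrix (Fin g ⊕ Fin g) (Fin g ⊕ Fin g) ℤ) k bg : ZMod 2))
        = ∑ k, ((a : Matrix (Fin g ⊕ Fin g) (Fin g ⊕ Fin g) ℤ) i k : ZMod 2) *
            ((1 : Matrix (Fin g ⊕ Fin g) (Fin g ⊕ Fin g) ℤ) k bg : ZMod 2) :=
          Finset.sum_congr rfl fun k _ => by rw [zmodcast' (hb k)]
      _ = ((a : Matrix (Fin g ⊕ Fin g) (Fin g ⊕ Fin g) ℤ) i bg : ZMod 2) := by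
          simp [Matrix.one_apply, apply_ite]
      _ = ((1 : Matrix (Fin g ⊕ Fin g) (Fin g ⊕ Fin g) ℤ) i bg : ZMod 2) := zmodcast' (ha i)
  inv_mem' := by
    intro a ha i
    set bg : Fin g ⊕ Fin g := Sum.inr ⟨g - 1, by omega⟩ with hbg
    have hmul : ((a⁻¹ : Matrix.symplecticGroup (Fin g) ℤ) : Matrix (Fin g ⊕ Fin g) (Fin g ⊕ Fin g) ℤ) *
        ((a : Matrix.symplecticGroup (Fin g) ℤ) : Matrix (Fin g ⊕ Fin g) (Fin g ⊕ Fin g) ℤ) =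
        (1 : Matrix (Fin g ⊕ Fin g) (Fin g ⊕ Fin g) ℤ) :=
      congrArg Subtype.val (inv_mul_cancel a)
    apply zmodcast
    calc (((a⁻¹ : Matrix.symplecticGroup (Fin g) ℤ) : Matrix (Fin g ⊕ Fin g) (Fin g ⊕ Fin g) ℤ) i bg : ZMod 2)
        = ∑ k, (((a⁻¹ : Matrix.symplecticGroup (Fin g) ℤ) : Matrix (Fin g ⊕ Fin g) (Fin g ⊕ Fin g) ℤ) i k : ZMod 2) *
            ((1 : Matrix (Fin g ⊕ Fin g) (Fin g ⊕ Fin g) ℤ) k bg : ZMod 2) := by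
          simp [Matrix.one_apply, apply_ite]
      _ = ∑ k, (((a⁻¹ : Matrix.symplecticGroup (Fin g) ℤ) : Matrix (Fin g ⊕ Fin g) (Fin g ⊕ Fin g) ℤ) i k : ZMod 2) *
            ((a : Matrix (Fin g ⊕ Fin g) (Fin g ⊕ Fin g) ℤ) k bg : ZMod 2) :=
          Finset.sum_congr rfl fun k _ => by rw [zmodcast' (ha k)]
      _ = ((((a⁻¹ : Matrix.symplecticGroup (Fin g) ℤ) : Matrix (Fin g ⊕ Fin g) (Fin g ⊕ Fin g) ℤ) *
            ((a : Matrix.symplecticGroup (Fin g) ℤ) : Matrix (Fin g ⊕ Fin g) (Fin g ⊕ Fin g) ℤ)) i bg : ZMod 2) := by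
          rw [Matrix.mul_apply]; push_cast; rfl
      _ = ((1 : Matrix (Fin g ⊕ Fin g) (Fin g ⊕ Fin g) ℤ) i bg : ZMod 2) := by rw [hmul]

namespace SpAux

variable {g : ℕ}

abbrev V (g : ℕ) := Fin g ⊕ Fin g → ℤ
abbrev Sp (g : ℕ) := Matrix.symplecticGroup (Fin g) ℤ

/-- the symplectic form -/
def om (x y : V g) : ℤ := (Matrix.J (Fin g) ℤ *ᵥ x) ⬝ᵥ y

theorem om_eq (x y : V g) : om x y =
    ∑ i, (x (Sum.inl i) * y (Sum.inr i) - x (Sum.inr i) * y (Sum.inl i)) := by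
  simp only [om, Matrix.J, dotProduct, Fintype.sum_sum_type, Finset.sum_sub_distrib]
  simp [Matrix.fromBlocks_mulVec, Matrix.neg_mulVec]
  ring

@[simp] theorem om_add_left (x y z : V g) : om (x + y) z = om x z + om y z := by
  simp [om, Matrix.mulVec_add]
@[simp] theorem om_add_right (x y z : V g) : om x (y + z) = om x y + om x z := by
  simp [om]
@[simp] theorem om_smul_left (n : ℤ) (x z : V g) : om (n • x) z = n * om x z := by
  simp [om, Matrix.mulVec_smul, -zsmul_eq_mul]
@[simp] theorem om_smul_right (n : ℤ) (x z : V g) : om x (n • z) = n * om x z := by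
  simp [om, -zsmul_eq_mul]
@[simp] theorem om_neg_left (x z : V g) : om (-x) z = - om x z := by
  simp [om, Matrix.mulVec_neg]
@[simp] theorem om_neg_right (x z : V g) : om x (-z) = - om x z := by
  simp [om]
@[simp] theorem om_zero_left (z : V g) : om 0 z = 0 := by
  simp [om]
@[simp] theorem om_zero_right (z : V g) : om z 0 = 0 := by
  simp [om]
@[simp] theorem om_self (x : V g) : om x x = 0 := by
  rw [om_eq]; apply Finset.sum_eq_zero; intros; ring
theorem om_comm (x y : V g) : om x y = - om y x := by
  rw [om_eq, om_eq, ← Finset.sum_neg_distrib]; apply Finset.sum_congr rfl; intros; ring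

def act (σ : Sp g) (x : V g) : V g := (σ : Matrix _ _ ℤ) *ᵥ x

@[simp] theorem act_mul (σ τ : Sp g) (x : V g) : act (σ * τ) x = act σ (act τ x) := by
  simp [act]
@[simp] theorem act_one (x : V g) : act 1 x = x := by simp [act]
@[simp] theorem act_add (σ : Sp g) (x y : V g) : act σ (x + y) = act σ x + act σ y := by
  simp [act, Matrix.mulVec_add]
@[simp] theorem act_smul (σ : Sp g) (n : ℤ) (y : V g) : act σ (n • y) = n • act σ y := by
  simp [act, Matrix.mulVec_smul, -zsmul_eq_mul]
@[simp] theorem act_inv_act (σ : Sp g) (x : V g) : act σ⁻¹ (act σ x) = x := by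
  rw [← act_mul]; simp
@[simp] theorem act_act_inv (σ : Sp g) (x : V g) : act σ (act σ⁻¹ x) = x := by
  rw [← act_mul]; simp

theorem sp_ext {σ τ : Sp g} (h : ∀ x, act σ x = act τ x) : σ = τ := by
  apply Subtype.ext
  apply Matrix.ext_of_mulVec_single
  intro i; exact h _

@[simp] theorem om_act (σ : Sp g) (x y : V g) : om (act σ x) (act σ y) = om x y := by
  have h := SymplecticGroup.mem_iff'.1 σ.2
  simp only [om, act]
  conv_rhs => rw [← h]
  rw [Matrix.dotProduct_mulVec, ← Matrix.mulVec_transpose, Matrix.mulVec_mulVec,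
    Matrix.mulVec_mulVec, Matrix.mul_assoc]

theorem mem_of_om (A : Matrix (Fin g ⊕ Fin g) (Fin g ⊕ Fin g) ℤ)
    (h : ∀ x y, om (A *ᵥ x) (A *ᵥ y) = om x y) : A ∈ Matrix.symplecticGroup (Fin g) ℤ := by
  rw [SymplecticGroup.mem_iff']
  ext i j
  have h1 := h (Pi.single j 1) (Pi.single i 1)
  simp only [om] at h1
  rw [Matrix.dotProduct_mulVec, ← Matrix.mulVec_transpose, Matrix.mulVec_mulVec,
    Matrix.mulVec_mulVec] at h1
  simpa [Matrix.mul_assoc] using h1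

def Tmat (u : V g) (n : ℤ) : Matrix (Fin g ⊕ Fin g) (Fin g ⊕ Fin g) ℤ :=
  1 + n • Matrix.vecMulVec u (Matrix.J (Fin g) ℤ *ᵥ u)

theorem Tmat_mulVec (u : V g) (n : ℤ) (x : V g) : Tmat u n *ᵥ x = x + (n * om u x) • u := by
  rw [Tmat, Matrix.add_mulVec, Matrix.one_mulVec, Matrix.smul_mulVec, Matrix.vecMulVec_mulVec]
  ext i
  simp [om]
  ring

/-- transvection -/
def T (u : V g) (n : ℤ) : Sp g := ⟨Tmat u n, mem_of_om _ (by
  intro x y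
  rw [Tmat_mulVec, Tmat_mulVec]
  simp [-zsmul_eq_mul]
  rw [om_comm x u]; ring)⟩

@[simp] theorem act_T (u : V g) (n : ℤ) (x : V g) : act (T u n) x = x + (n * om u x) • u :=
  Tmat_mulVec u n x

/-- Eichler transformation -/
def E (u w : V g) (n : ℤ) : Sp g := T (u + w) n * T u (-n) * T w (-n)

theorem act_E {u w : V g} (h : om u w = 0) (n : ℤ) (x : V g) :
    act (E u w n) x = x + (n * om u x) • w + (n * om w x) • u := by
  have h' : om w u = 0 := by rw [om_comm, h]; rfl
  simp only [E, act_mul, act_T, om_add_left, om_add_right, om_smul_right, om_self, h, h']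
  ext j
  simp
  ring

theorem conj_T (σ : Sp g) (u : V g) (n : ℤ) : σ * T u n * σ⁻¹ = T (act σ u) n := by
  apply sp_ext; intro x
  have : om (act σ u) x = om u (act σ⁻¹ x) := by
    conv_lhs => rw [← act_act_inv σ x]
    rw [om_act]
  simp [this, -zsmul_eq_mul]

theorem conj_E (σ : Sp g) (u w : V g) (n : ℤ) :
    σ * E u w n * σ⁻¹ = E (act σ u) (act σ w) n := by
  simp only [E, ← act_add, ← conj_T]
  group

theorem E_add {e u w : V g} (hu : om u e = 0) (hw : om w e = 0) (n : ℤ) :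
    E u e n * E w e n = T e (n ^ 2 * om u w) * E (u + w) e n := by
  have hu' : om e u = 0 := by rw [om_comm, hu]; rfl
  have hw' : om e w = 0 := by rw [om_comm, hw]; rfl
  apply sp_ext; intro x
  simp only [act_mul, act_E hu, act_E hw, act_E (show om (u + w) e = 0 by simp [hu, hw]), act_T]
  simp only [om_add_left, om_add_right, om_smul_right, om_self, hu, hu', hw']
  ext j
  simp
  ring

theorem E_neg {e u : V g} (hu : om u e = 0) (n : ℤ) : E (-u) e n = E u e (-n) := by
  apply sp_ext; intro x
  rw [act_E hu, act_E (by simp [hu])]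
  ext j; simp

theorem E_zero (e : V g) (n : ℤ) : E 0 e n = 1 := by
  apply sp_ext; intro x
  rw [act_E (by simp)]; simp

theorem E_swap {u w : V g} (h : om u w = 0) (n : ℤ) : E u w n = E w u n := by
  have h' : om w u = 0 := by rw [om_comm, h]; rfl
  apply sp_ext; intro x
  rw [act_E h, act_E h']; ext j; simp; ring

theorem T_mul (u : V g) (n m : ℤ) : T u n * T u m = T u (n + m) := by
  apply sp_ext; intro x
  simp only [act_mul, act_T, om_add_right, om_smul_right, om_self]
  ext j; simp; ring

theorem T_zero (u : V g) : T u 0 = 1 := by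
  apply sp_ext; intro x
  simp

theorem T_pow (u : V g) (n k : ℤ) : T u n ^ k = T u (n * k) := by
  induction k with
  | zero => simp [T_zero]
  | succ i ih => rw [_root_.zpow_add, ih, zpow_one, T_mul]; congr 1; ring
  | pred i ih =>
    rw [_root_.zpow_sub, ih, zpow_one, mul_inv_eq_iff_eq_mul, T_mul]; congr 1; ring

/-- index of the hyperbolic pair -/
def idx : Fin g ⊕ Fin g → Fin g := Sum.elim id id

@[simp] theorem idx_inl (i : Fin g) : idx (Sum.inl i) = i := rfl
@[simp] theorem idx_inr (i : Fin g) : idx (Sum.inr i) = i := rfl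
@[simp] theorem idx_swap (j : Fin g ⊕ Fin g) : idx j.swap = idx j := by cases j <;> rfl

def b (j : Fin g ⊕ Fin g) : V g := Pi.single j 1

theorem b_self (j : Fin g ⊕ Fin g) : b j j = 1 := by simp [b]
theorem b_ne {j k : Fin g ⊕ Fin g} (h : k ≠ j) : b j k = 0 := by simp [b, h]
theorem b_idx {j k : Fin g ⊕ Fin g} (h : idx k ≠ idx j) : b j k = 0 :=
  b_ne (fun h' => h (by rw [h']))

theorem om_inl (i : Fin g) (x : V g) : om (b (Sum.inl i)) x = x (Sum.inr i) := by
  rw [om_eq, Finset.sum_eq_single i]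
  · simp [b]
  · intro k _ hk; simp [b, hk]
  · simp

theorem om_inr (i : Fin g) (x : V g) : om (b (Sum.inr i)) x = - x (Sum.inl i) := by
  rw [om_eq, Finset.sum_eq_single i]
  · simp [b]
  · intro k _ hk; simp [b, hk]
  · simp

theorem om_b (j : Fin g ⊕ Fin g) (x : V g) : om (b j) x = x j.swap ∨ om (b j) x = - x j.swap := by
  cases j with
  | inl i => left; exact om_inl i x
  | inr i => right; exact om_inr i x

theorem om_bb {j k : Fin g ⊕ Fin g} (h : idx j ≠ idx k) : om (b j) (b k) = 0 := by
  have : b k j.swap = 0 := b_idx (by simpa using h)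
  rcases om_b j (b k) with h | h <;> simp [h, this]

@[simp] theorem om_ef (i : Fin g) : om (b (Sum.inl i)) (b (Sum.inr i)) = 1 := by
  rw [om_inl, b_self]

/-- commutator part -/
def Nsub (Γ : Subgroup (Sp g)) : Subgroup (Sp g) :=
  (Abelianization.of (G := Γ)).ker.map Γ.subtype

theorem comm_mem (Γ : Subgroup (Sp g)) {a σ : Sp g} (ha : a ∈ Γ) (hσ : σ ∈ Γ) :
    a⁻¹ * (σ * a * σ⁻¹) ∈ Nsub Γ := by
  have key : ∀ a' σ' : Γ, a'⁻¹ * (σ' * a' * σ'⁻¹) ∈ (Abelianization.of (G := Γ)).ker := by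
    intro a' σ'
    rw [MonoidHom.mem_ker, map_mul, map_mul, map_mul, map_inv, map_inv,
      mul_comm (Abelianization.of σ'), mul_inv_cancel_right, inv_mul_cancel]
  have h := Subgroup.mem_map_of_mem Γ.subtype (key ⟨a, ha⟩ ⟨σ, hσ⟩)
  simpa [Nsub] using h

theorem C1 (Γ : Subgroup (Sp g)) {u t w s : V g} {n : ℤ}
    (hσ : E s t 1 ∈ Γ) (hE : E u w n ∈ Γ)
    (hut : om u t = 0) (huw : om u w = 0) (hwt : om w t = 0) (hst : om s t = 0)
    (hsu : om s u = 0) (hsw : om s w = 1) : E u t n ∈ Nsub Γ := by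
  have h := comm_mem Γ hE hσ
  rw [conj_E, act_E hst, act_E hst] at h
  have htu : om t u = 0 := by rw [om_comm, hut]; rfl
  have htw : om t w = 0 := by rw [om_comm, hwt]; rfl
  have hwu : om w u = 0 := by rw [om_comm, huw]; rfl
  simp only [htu, htw, hsu, hsw, mul_zero, zero_smul, add_zero, mul_one, one_smul] at h
  convert h using 1
  rw [eq_inv_mul_iff_mul_eq]
  apply sp_ext; intro x
  rw [act_mul, act_E huw, act_E hut, act_E (by simp [huw, hut])]
  simp only [om_add_left, om_add_right, om_smul_right, om_self, hut, hwt, hwu]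
  ext j; simp; ring

theorem C2 (Γ : Subgroup (Sp g)) {t w s : V g} {n p : ℤ}
    (hσ : E s t p ∈ Γ) (hT : T w n ∈ Γ) (hE : E w t (p * n) ∈ Nsub Γ)
    (hwt : om w t = 0) (hst : om s t = 0)
    (hsw : om s w = 1) : T t (p ^ 2 * n) ∈ Nsub Γ := by
  have h := comm_mem Γ hT hσ
  rw [conj_T, act_E hst] at h
  have htw : om t w = 0 := by rw [om_comm, hwt]; rfl
  simp only [htw, hsw, mul_zero, zero_smul, add_zero, mul_one] at h
  have h2 := mul_mem h (inv_mem hE)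
  convert h2 using 1
  rw [eq_mul_inv_iff_mul_eq, eq_inv_mul_iff_mul_eq]
  apply sp_ext; intro x
  simp only [act_mul, act_E hwt, act_T]
  simp only [om_add_left, om_add_right, om_smul_left, om_smul_right, om_self, hwt, htw]
  ext j; simp; ring

section Gam

variable (hg1 : 1 ≤ g)

def lst : Fin g := ⟨g - 1, by omega⟩

theorem mem_gamma (σ : Sp g) : σ ∈ GammaP2 g hg1 ↔
    ∀ i, (2 : ℤ) ∣ (act σ (b (Sum.inr (lst hg1))) - b (Sum.inr (lst hg1))) i := by
  have : ∀ i, act σ (b (Sum.inr (lst hg1))) i = (σ : Matrix (Fin g ⊕ Fin g) (Fin g ⊕ Fin g) ℤ) i (Sum.inr (lst hg1)) := by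
    intro i; simp [act, b]
  show (∀ i, _ ≡ _ [ZMOD 2]) ↔ _
  apply forall_congr'; intro i
  rw [Int.modEq_comm, Int.modEq_iff_dvd, Pi.sub_apply, this]
  have h2 : (1 : Matrix (Fin g ⊕ Fin g) (Fin g ⊕ Fin g) ℤ) i (Sum.inr (lst hg1)) =
      b (Sum.inr (lst hg1)) i := by
    simp [b, Matrix.one_apply, Pi.single_apply]
  rw [← h2]; rfl

theorem T_gamma {u : V g} {n : ℤ} (h : 2 ∣ n * om u (b (Sum.inr (lst hg1)))) :
    T u n ∈ GammaP2 g hg1 := by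
  rw [mem_gamma]; intro i
  rw [act_T]
  simp only [Pi.sub_apply, Pi.add_apply, Pi.smul_apply, smul_eq_mul, add_sub_cancel_left]
  exact h.mul_right _

theorem E_gamma {u w : V g} {n : ℤ} (h0 : om u w = 0)
    (h : 2 ∣ n * om u (b (Sum.inr (lst hg1))))
    (h' : 2 ∣ n * om w (b (Sum.inr (lst hg1)))) :
    E u w n ∈ GammaP2 g hg1 := by
  rw [mem_gamma]; intro i
  rw [act_E h0]
  simp only [Pi.sub_apply, Pi.add_apply, Pi.smul_apply, smul_eq_mul, add_assoc,
    add_sub_cancel_left]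
  exact dvd_add (h.mul_right _) (h'.mul_right _)

theorem third (hg : 4 ≤ g) (i j : Fin g) : ∃ k, k ≠ lst hg1 ∧ k ≠ i ∧ k ≠ j := by
  have : ∃ k, k ∉ ({lst hg1, i, j} : Finset (Fin g)) := by
    by_contra! h
    have h1 : (Finset.univ : Finset (Fin g)) ⊆ {lst hg1, i, j} := fun x _ => h x
    have h2 := Finset.card_le_card h1
    have h3 := Finset.card_le_three (a := lst hg1) (b := i) (c := j)
    simp at h2
    omega
  obtain ⟨k, hk⟩ := this
  simp at hk
  exact ⟨k, hk⟩

theorem om_v {j : Fin g ⊕ Fin g} (h : idx j ≠ lst hg1) :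
    om (b j) (b (Sum.inr (lst hg1))) = 0 := om_bb (by simpa using h)

/-- `t` arbitrary basis vector orthogonal to `B_g`, the other one free -/
theorem N1 (hg : 4 ≤ g) {i j : Fin g ⊕ Fin g} (hij : idx i ≠ idx j) (hi : idx i ≠ lst hg1)
    (hj : om (b j) (b (Sum.inr (lst hg1))) = 0) (n : ℤ) :
    E (b i) (b j) n ∈ Nsub (GammaP2 g hg1) := by
  obtain ⟨k, hk, hki, hkj⟩ := third hg1 hg (idx i) (idx j)
  have hkk : ∀ k' : Fin g ⊕ Fin g, idx k' = k → om (b k') (b (Sum.inr (lst hg1))) = 0 :=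
    fun k' h => om_v hg1 (by rw [h]; exact hk)
  apply C1 (w := b (Sum.inr k)) (s := b (Sum.inl k))
  · apply E_gamma
    · exact om_bb hkj
    · rw [hkk _ rfl]; simp
    · rw [hj]; simp
  · apply E_gamma
    · exact om_bb hki.symm
    · rw [om_v hg1 hi]; simp
    · rw [hkk _ rfl]; simp
  · exact om_bb hij
  · exact om_bb hki.symm
  · exact om_bb hkj
  · exact om_bb hkj
  · exact om_bb hki
  · simp

theorem N3 (hg : 4 ≤ g) {i : Fin g ⊕ Fin g} (hi : idx i ≠ lst hg1) {n : ℤ} (hn : 2 ∣ n) :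
    E (b i) (b (Sum.inl (lst hg1))) n ∈ Nsub (GammaP2 g hg1) := by
  obtain ⟨k, hk, hki, -⟩ := third hg1 hg (idx i) (idx i)
  have hkk : ∀ k' : Fin g ⊕ Fin g, idx k' = k → om (b k') (b (Sum.inr (lst hg1))) = 0 :=
    fun k' h => om_v hg1 (by rw [h]; exact hk)
  rw [E_swap (om_bb (by simpa using hi))]
  apply C1 (w := b (Sum.inr k)) (s := b (Sum.inl k))
  · apply E_gamma
    · exact om_bb hki
    · rw [hkk _ rfl]; simp
    · rw [om_v hg1 hi]; simp
  · apply E_gamma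
    · exact om_bb (by simpa using hk.symm)
    · exact hn.mul_right _
    · exact hn.mul_right _
  · exact om_bb (by simpa using hi.symm)
  · exact om_bb (by simpa using hk.symm)
  · exact om_bb hki
  · exact om_bb hki
  · exact om_bb hk
  · simp

theorem N4 (hg : 4 ≤ g) {j : Fin g ⊕ Fin g}
    (hj : om (b j) (b (Sum.inr (lst hg1))) = 0) (n : ℤ) :
    T (b j) n ∈ Nsub (GammaP2 g hg1) := by
  obtain ⟨k, hk, hkj, -⟩ := third hg1 hg (idx j) (idx j)
  have hkk : ∀ k' : Fin g ⊕ Fin g, idx k' = k → om (b k') (b (Sum.inr (lst hg1))) = 0 :=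
    fun k' h => om_v hg1 (by rw [h]; exact hk)
  have := C2 (GammaP2 g hg1) (t := b j) (w := b (Sum.inr k)) (s := b (Sum.inl k)) (n := n) (p := 1)
    (by
      apply E_gamma
      · exact om_bb hkj
      · rw [hkk _ rfl]; simp
      · rw [hj]; simp)
    (by apply T_gamma; rw [hkk _ rfl]; simp)
    (by apply N1 hg1 hg _ _ hj; exacts [hkj, hk])
    (om_bb hkj) (om_bb hkj) (by simp)
  simpa using this

theorem N5 (hg : 4 ≤ g) : T (b (Sum.inl (lst hg1))) 4 ∈ Nsub (GammaP2 g hg1) := by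
  obtain ⟨k, hk, -, -⟩ := third hg1 hg (lst hg1) (lst hg1)
  have hkk : ∀ k' : Fin g ⊕ Fin g, idx k' = k → om (b k') (b (Sum.inr (lst hg1))) = 0 :=
    fun k' h => om_v hg1 (by rw [h]; exact hk)
  have := C2 (GammaP2 g hg1) (t := b (Sum.inl (lst hg1))) (w := b (Sum.inr k))
    (s := b (Sum.inl k)) (n := 1) (p := 2)
    (by
      apply E_gamma
      · exact om_bb hk
      · exact dvd_mul_right _ _
      · exact dvd_mul_right _ _)
    (by apply T_gamma; rw [hkk _ rfl]; simp)
    (by apply N3 hg1 hg (i := Sum.inr k) hk; simp)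
    (om_bb hk) (om_bb hk) (by simp)
  simpa using this

end Gam

theorem span_mem (H : AddSubgroup (V g)) (J : Set (Fin g)) (hb : ∀ j, idx j ∈ J → b j ∈ H)
    (w : V g) (hw : ∀ j, idx j ∉ J → w j = 0) : w ∈ H := by
  have : w = ∑ j, w j • b j := by
    conv_lhs => rw [pi_eq_sum_univ' w]
    apply Finset.sum_congr rfl; intro j _
    congr 1
  rw [this]
  apply sum_mem; intro j _
  by_cases hj : idx j ∈ J
  · exact zsmul_mem (hb j hj) _
  · rw [hw j hj]; simp

theorem E_mem (K : Subgroup (Sp g)) (m : ℤ) (e : V g) (J : Set (Fin g))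
    (hT : ∀ n, m ∣ n → T e n ∈ K)
    (hE : ∀ j, idx j ∈ J → om (b j) e = 0 ∧ ∀ n, m ∣ n → E (b j) e n ∈ K)
    (w : V g) (hw : ∀ j, idx j ∉ J → w j = 0) :
    om w e = 0 ∧ ∀ n, m ∣ n → E w e n ∈ K := by
  let H : AddSubgroup (V g) :=
    { carrier := {w | om w e = 0 ∧ ∀ n, m ∣ n → E w e n ∈ K}
      zero_mem' := ⟨by simp, fun n _ => by rw [E_zero]; exact one_mem _⟩
      add_mem' := by
        rintro u w ⟨hu, hu'⟩ ⟨hw, hw'⟩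
        refine ⟨by simp [hu, hw], fun n hn => ?_⟩
        have h := E_add hu hw n
        rw [← inv_mul_eq_iff_eq_mul] at h
        rw [← h]
        refine mul_mem (inv_mem (hT _ ?_)) (mul_mem (hu' n hn) (hw' n hn))
        exact (hn.pow two_ne_zero).mul_right _
      neg_mem' := by
        rintro u ⟨hu, hu'⟩
        refine ⟨by simp [hu], fun n hn => ?_⟩
        rw [E_neg hu]
        exact hu' _ (by simpa using hn) }
  exact span_mem H J hE w hw

theorem euclid1 {m c d : ℤ} (hm : m = 1 ∨ m = 2) (hd : d ≠ 0) (hc : m ∣ c)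
    (hodd : m = 2 → ¬ 2 ∣ d) : ∃ q, |c + m * q * d| < |d| := by
  rcases hm with rfl | rfl
  · refine ⟨-(c / d), ?_⟩
    have : c + 1 * -(c / d) * d = c % d := by
      have := Int.emod_add_mul_ediv c d; linarith
    rw [this, abs_of_nonneg (Int.emod_nonneg _ hd)]
    exact Int.emod_lt_abs _ hd
  · have hodd := hodd rfl
    have h1 := Int.emod_nonneg c (b := 2 * d) (by omega)
    have h2 := Int.emod_lt_abs c (b := 2 * d) (by omega)
    have h3 := Int.emod_add_mul_ediv c (2 * d)
    have h4 : |2 * d| = 2 * |d| := by rw [abs_mul]; rfl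
    rw [h4] at h2
    have h5 : ¬ 2 ∣ |d| := by rwa [dvd_abs]
    have h6 : 2 ∣ c % (2 * d) := by
      rw [eq_sub_of_add_eq h3]
      exact dvd_sub hc ((dvd_mul_right 2 d).mul_right _)
    by_cases h : c % (2 * d) < |d|
    · refine ⟨-(c / (2 * d)), ?_⟩
      have : c + 2 * -(c / (2 * d)) * d = c % (2 * d) := by linarith
      rw [this, abs_of_nonneg h1]; exact h
    · have h7 : |d| < c % (2 * d) := by
        rcases lt_or_eq_of_le (not_lt.1 h) with h | h
        · exact h
        · rw [← h] at h6; exact absurd h6 h5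
      rcases abs_cases d with ⟨h8, h9⟩ | ⟨h8, h9⟩
      · refine ⟨-(c / (2 * d)) - 1, ?_⟩
        have : c + 2 * (-(c / (2 * d)) - 1) * d = c % (2 * d) - 2 * d := by linarith
        rw [this, abs_lt]; constructor <;> omega
      · refine ⟨-(c / (2 * d)) + 1, ?_⟩
        have : c + 2 * (-(c / (2 * d)) + 1) * d = c % (2 * d) + 2 * d := by linarith
        rw [this, abs_lt]; constructor <;> omega

theorem euclid2 {c : ℤ} (d : ℤ) (hc : c ≠ 0) : ∃ r, 1 ≤ d + r * c ∧ d + r * c ≤ |c| := by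
  have h1 := Int.emod_nonneg (d - 1) hc
  have h2 := Int.emod_lt_abs (d - 1) hc
  have h3 := Int.emod_add_mul_ediv (d - 1) c
  refine ⟨-((d - 1) / c), ?_⟩
  have : d + -((d - 1) / c) * c = (d - 1) % c + 1 := by linarith
  rw [this]; omega

/-- class of vectors to be reduced -/
structure Good (m : ℤ) (J : Set (Fin g)) (i : Fin g) (x : V g) : Prop where
  supp : ∀ j, idx j ∉ J → idx j ≠ i → x j = 0
  dvd : ∀ j, j ≠ Sum.inr i → m ∣ x j
  odd : m = 2 → ¬ 2 ∣ x (Sum.inr i)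
  prim : ∃ y, om x y = 1

theorem Good.of {m : ℤ} {J : Set (Fin g)} {i : Fin g} {x : V g} (h : Good m J i x) (k : Sp g)
    (z : V g) (hz : act k x = x + z) (hm : ∀ j, m ∣ z j)
    (hs : ∀ j, idx j ∉ J → idx j ≠ i → z j = 0) :
    Good m J i (act k x) := by
  obtain ⟨y, hy⟩ := h.prim
  refine ⟨?_, ?_, ?_, ⟨act k y, by simpa using hy⟩⟩
  · intro j hj hj'; rw [hz]; simp [h.supp j hj hj', hs j hj hj']
  · intro j hj; rw [hz]; exact dvd_add (h.dvd j hj) (hm j)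
  · intro hm2; rw [hz]
    have h1 := h.odd hm2
    have h2 := hm (Sum.inr i)
    rw [hm2] at h2
    rw [Pi.add_apply]; omega

section Reduce

variable (K : Subgroup (Sp g)) (m : ℤ) (J : Set (Fin g)) (i : Fin g)

theorem move1
    (hi : i ∉ J)
    (hTe : ∀ n, m ∣ n → T (b (Sum.inl i)) n ∈ K)
    (hEe : ∀ j, idx j ∈ J → ∀ n, m ∣ n → E (b j) (b (Sum.inl i)) n ∈ K)
    {x : V g} (hx : Good m J i x) (j : Fin g ⊕ Fin g) (hj : idx j ∈ J ∨ idx j = i)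
    (hji : j ≠ Sum.inr i) (q : ℤ) : ∃ k ∈ K, Good m J i (act k x) ∧
      act k x j = x j + m * q * x (Sum.inr i) ∧ act k x (Sum.inr i) = x (Sum.inr i) := by
  rcases hj with hj | hj
  · have hne : idx j ≠ i := fun h => hi (h ▸ hj)
    have ho : om (b j) (b (Sum.inl i)) = 0 := om_bb hne
    have hact := act_E ho (m * q) x
    rw [add_assoc] at hact
    have h1 : b (Sum.inl i) (Sum.inr i) = 0 := b_ne (by simp)
    have h2 : b j (Sum.inr i) = 0 := b_idx (by simpa using hne.symm)
    have h3 : b (Sum.inl i) j = 0 := b_idx (by simpa using hne)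
    refine ⟨E (b j) (b (Sum.inl i)) (m * q), hEe j hj _ (dvd_mul_right _ _),
      hx.of _ _ hact ?_ ?_, ?_, ?_⟩
    · intro k
      simp only [Pi.add_apply, Pi.smul_apply, smul_eq_mul, mul_assoc]
      exact dvd_add (dvd_mul_right _ _) (dvd_mul_right _ _)
    · intro k hk hk'
      have h1 : b (Sum.inl i) k = 0 := b_idx (by simpa using hk')
      have h2 : b j k = 0 := b_idx (fun h => hk (h ▸ hj))
      simp [h1, h2]
    · rw [hact]; simp [h3, b_self, om_inl]
    · rw [hact]; simp [h1, h2]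
  · have hjj : j = Sum.inl i := by
      cases j with
      | inl k => simp at hj; rw [hj]
      | inr k => simp at hj; exact absurd (by rw [hj]) hji
    subst hjj
    have hact := act_T (b (Sum.inl i)) (m * q) x
    have h1 : b (Sum.inl i) (Sum.inr i) = 0 := b_ne (by simp)
    refine ⟨_, hTe (m * q) (dvd_mul_right _ _), hx.of _ _ hact ?_ ?_, ?_, ?_⟩
    · intro k
      simp only [Pi.smul_apply, smul_eq_mul, mul_assoc]
      exact dvd_mul_right _ _
    · intro k hk hk'
      have h1 : b (Sum.inl i) k = 0 := b_idx (by simpa using hk')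
      simp [h1]
    · rw [hact]; simp [b_self, om_inl]
    · rw [hact]; simp [h1]

theorem move2
    (hi : i ∉ J)
    (hTf : ∀ n, T (b (Sum.inr i)) n ∈ K)
    (hEf : ∀ j, idx j ∈ J → ∀ n, E (b j) (b (Sum.inr i)) n ∈ K)
    {x : V g} (hx : Good m J i x) (j : Fin g ⊕ Fin g) (hj : idx j ∈ J ∨ idx j = i)
    (hji : j ≠ Sum.inr i) (r : ℤ) :
    ∃ k ∈ K, Good m J i (act k x) ∧
      act k x (Sum.inr i) = x (Sum.inr i) + r * x j := by
  rcases hj with hj | hj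
  · have hne : idx j ≠ i := fun h => hi (h ▸ hj)
    have ho : om (b j.swap) (b (Sum.inr i)) = 0 := om_bb (by simpa using hne)
    have h2 : b j.swap (Sum.inr i) = 0 := b_idx (by simpa using hne.symm)
    obtain ⟨r', hr'⟩ : ∃ r', r' * om (b j.swap) x = r * x j := by
      rcases om_b j.swap x with h | h <;> rw [h, Sum.swap_swap]
      · exact ⟨r, rfl⟩
      · exact ⟨-r, by ring⟩
    have hact := act_E ho r' x
    rw [add_assoc] at hact
    have hval : act (E (b j.swap) (b (Sum.inr i)) r') x (Sum.inr i) =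
        x (Sum.inr i) + r * x j := by
      rw [hact]; simp [h2, b_self, hr']
    refine ⟨E (b j.swap) (b (Sum.inr i)) r', hEf _ (by simpa using hj) _,
      hx.of _ _ hact ?_ ?_, hval⟩
    · intro k
      simp only [Pi.add_apply, Pi.smul_apply, smul_eq_mul, hr', om_inr]
      refine dvd_add (((hx.dvd j hji).mul_left _).mul_right _) (Dvd.dvd.mul_right ?_ _)
      apply Dvd.dvd.mul_left
      rw [dvd_neg]
      exact hx.dvd _ (by simp)
    · intro k hk hk'
      have h1 : b (Sum.inr i) k = 0 := b_idx (by simpa using hk')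
      have h2 : b j.swap k = 0 := b_idx (by intro h; rw [idx_swap] at h; exact hk (h ▸ hj))
      simp [h1, h2]
  · have hjj : j = Sum.inl i := by
      cases j with
      | inl k => simp at hj; rw [hj]
      | inr k => simp at hj; exact absurd (by rw [hj]) hji
    subst hjj
    have hact := act_T (b (Sum.inr i)) (-r) x
    have hval : act (T (b (Sum.inr i)) (-r)) x (Sum.inr i) =
        x (Sum.inr i) + r * x (Sum.inl i) := by
      rw [hact]; simp [b_self, om_inr]
    refine ⟨_, hTf (-r), hx.of _ _ hact ?_ ?_, hval⟩
    · intro k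
      simp only [Pi.smul_apply, smul_eq_mul, om_inr]
      apply Dvd.dvd.mul_right; apply Dvd.dvd.mul_left
      rw [dvd_neg]
      exact hx.dvd _ (by simp)
    · intro k hk hk'
      have h1 : b (Sum.inr i) k = 0 := b_idx (by simpa using hk')
      simp [h1]

theorem reduce_final
    (hm : m = 1 ∨ m = 2)
    (hi : i ∉ J)
    (hTe : ∀ n, m ∣ n → T (b (Sum.inl i)) n ∈ K)
    (hTf : ∀ n, T (b (Sum.inr i)) n ∈ K)
    (hEe : ∀ j, idx j ∈ J → ∀ n, m ∣ n → E (b j) (b (Sum.inl i)) n ∈ K)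
    {x : V g} (hx : Good m J i x)
    (hd : ∀ j, j ≠ Sum.inr i → m * x (Sum.inr i) ∣ x j) :
    ∃ k ∈ K, act k x = b (Sum.inr i) := by
  have hm0 : m ≠ 0 := by omega
  have hu : x (Sum.inr i) = 1 ∨ x (Sum.inr i) = -1 := by
    obtain ⟨y, hy⟩ := hx.prim
    have hall : ∀ j, x (Sum.inr i) ∣ x j := by
      intro j
      by_cases hj : j = Sum.inr i
      · rw [hj]
      · exact (dvd_mul_left _ _).trans (hd j hj)
    have : x (Sum.inr i) ∣ 1 := by
      rw [← hy, om_eq]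
      apply Finset.dvd_sum; intro k _
      exact dvd_sub ((hall _).mul_right _) ((hall _).mul_right _)
    exact Int.isUnit_iff.1 (isUnit_of_dvd_one this)
  -- clear
  classical
  let w : V g := fun j => if idx j ∈ J then -(x j / (m * x (Sum.inr i))) else 0
  have hw : ∀ j, idx j ∉ J → w j = 0 := fun j hj => by simp [w, hj]
  obtain ⟨ho, hE⟩ := E_mem K m (b (Sum.inl i)) J hTe
    (fun j hj => ⟨om_bb (fun h => hi (by rw [h] at hj; exact hj)), hEe j hj⟩) w hw
  have hact := act_E ho m x
  obtain ⟨a, ha, hxa⟩ : ∃ a, m ∣ a ∧ act (E w (b (Sum.inl i)) m) x =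
      a • b (Sum.inl i) + x (Sum.inr i) • b (Sum.inr i) := by
    refine ⟨x (Sum.inl i) + m * om w x, dvd_add (hx.dvd _ (by simp)) (dvd_mul_right _ _), ?_⟩
    rw [hact]
    ext j
    simp only [Pi.add_apply, Pi.smul_apply, smul_eq_mul, om_inl]
    by_cases hj : idx j ∈ J
    · have hne : idx j ≠ i := fun h => hi (h ▸ hj)
      have hji : j ≠ Sum.inr i := fun h => hne (by rw [h]; rfl)
      rw [b_idx (j := Sum.inl i) (by simpa using hne), b_idx (j := Sum.inr i) (by simpa using hne)]
      simp only [w, hj, if_true]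
      have := Int.mul_ediv_cancel' (hd j hji)
      linarith
    · rw [hw j hj]
      by_cases hne : idx j = i
      · cases j with
        | inl k =>
          simp at hne; subst hne
          rw [b_self, b_ne (j := Sum.inr k) (by simp)]; ring
        | inr k =>
          simp at hne; subst hne
          rw [b_self, b_ne (j := Sum.inl k) (by simp)]; ring
      · rw [b_idx (j := Sum.inl i) (by simpa using hne),
          b_idx (j := Sum.inr i) (by simpa using hne), hx.supp j hj hne]; ring
  have hfe : om (b (Sum.inr i)) (b (Sum.inl i)) = -1 := by rw [om_comm, om_ef]
  have h2 : act (T (b (Sum.inl i)) (-a * x (Sum.inr i)) * E w (b (Sum.inl i)) m) x =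
      x (Sum.inr i) • b (Sum.inr i) := by
    rw [act_mul, hxa, act_T]
    simp only [om_add_right, om_smul_right, om_self, om_ef]
    ext j
    simp only [Pi.add_apply, Pi.smul_apply, smul_eq_mul]
    rcases hu with hu | hu <;> rw [hu] <;> ring
  have hk : T (b (Sum.inl i)) (-a * x (Sum.inr i)) * E w (b (Sum.inl i)) m ∈ K :=
    mul_mem (hTe _ (by simpa using ha.mul_right _)) (hE m dvd_rfl)
  rcases hu with hu | hu
  · exact ⟨_, hk, by rw [h2, hu, one_smul]⟩
  · obtain ⟨s, hs⟩ : ∃ s, s * m = 2 := by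
      rcases hm with rfl | rfl
      · exact ⟨2, rfl⟩
      · exact ⟨1, rfl⟩
    refine ⟨T (b (Sum.inl i)) (-m) * (T (b (Sum.inr i)) (-s) * T (b (Sum.inl i)) (-m)) * _,
      mul_mem (mul_mem (hTe _ (by simp)) (mul_mem (hTf _) (hTe _ (by simp)))) hk, ?_⟩
    rw [act_mul, h2, hu]
    simp only [act_mul, act_T, om_add_right, om_smul_right, om_self, om_ef, hfe]
    ext j
    simp only [Pi.add_apply, Pi.smul_apply, smul_eq_mul]
    linear_combination (b (Sum.inr i) j - m * b (Sum.inl i) j) * hs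

theorem reduce0
    (hm : m = 1 ∨ m = 2)
    (hi : i ∉ J)
    (hTe : ∀ n, m ∣ n → T (b (Sum.inl i)) n ∈ K)
    (hTf : ∀ n, T (b (Sum.inr i)) n ∈ K)
    (hEe : ∀ j, idx j ∈ J → ∀ n, m ∣ n → E (b j) (b (Sum.inl i)) n ∈ K)
    (hEf : ∀ j, idx j ∈ J → ∀ n, E (b j) (b (Sum.inr i)) n ∈ K)
    {x : V g} (hx : Good m J i x) (hne : x (Sum.inr i) ≠ 0) :
    ∃ k ∈ K, act k x = b (Sum.inr i) := by
  induction hN : (x (Sum.inr i)).natAbs using Nat.strong_induction_on generalizing x with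
  | _ N ih =>
  by_cases hd : ∀ j, j ≠ Sum.inr i → m * x (Sum.inr i) ∣ x j
  · exact reduce_final K m J i hm hi hTe hTf hEe hx hd
  · push Not at hd
    obtain ⟨j, hji, hj⟩ := hd
    have hjJ : idx j ∈ J ∨ idx j = i := by
      by_contra! h
      exact hj (by rw [hx.supp j h.1 h.2]; simp)
    obtain ⟨q, hq⟩ := euclid1 hm hne (hx.dvd j hji) hx.odd
    obtain ⟨k1, hk1, hx1, h1, h2⟩ := move1 K m J i hi hTe hEe hx j hjJ hji q
    have hc : act k1 x j ≠ 0 := by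
      intro h
      rw [h] at h1
      exact hj ⟨-q, by linarith⟩
    obtain ⟨r, hr1, hr2⟩ := euclid2 (act k1 x (Sum.inr i)) hc
    obtain ⟨k2, hk2, hx2, h3⟩ := move2 K m J i hi hTf hEf hx1 j hjJ hji r
    obtain ⟨k3, hk3, h4⟩ := ih _ (by
      rw [← h1, Int.abs_eq_natAbs, Int.abs_eq_natAbs] at hq
      rw [Int.abs_eq_natAbs] at hr2
      rw [← hN, h3]
      omega) hx2 (by omega) rfl
    exact ⟨k3 * k2 * k1, mul_mem (mul_mem hk3 hk2) hk1, by simpa using h4⟩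

theorem reduce
    (hm : m = 1 ∨ m = 2)
    (hi : i ∉ J)
    (hTe : ∀ n, m ∣ n → T (b (Sum.inl i)) n ∈ K)
    (hTf : ∀ n, T (b (Sum.inr i)) n ∈ K)
    (hEe : ∀ j, idx j ∈ J → ∀ n, m ∣ n → E (b j) (b (Sum.inl i)) n ∈ K)
    (hEf : ∀ j, idx j ∈ J → ∀ n, E (b j) (b (Sum.inr i)) n ∈ K)
    {x : V g} (hx : Good m J i x) :
    ∃ k ∈ K, act k x = b (Sum.inr i) := by
  by_cases hne : x (Sum.inr i) = 0
  · obtain ⟨j, hj⟩ : ∃ j, x j ≠ 0 := by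
      by_contra! h
      have h0 : x = 0 := funext h
      obtain ⟨y, hy⟩ := hx.prim
      simp [h0] at hy
    have hji : j ≠ Sum.inr i := fun h => hj (by rw [h, hne])
    have hjJ : idx j ∈ J ∨ idx j = i := by
      by_contra! h
      exact hj (hx.supp j h.1 h.2)
    obtain ⟨k2, hk2, hx2, h3⟩ := move2 K m J i hi hTf hEf hx j hjJ hji 1
    obtain ⟨k, hk, h⟩ := reduce0 K m J i hm hi hTe hTf hEe hEf hx2
      (by rw [h3, hne]; simpa using hj)
    exact ⟨k * k2, mul_mem hk hk2, by simpa using h⟩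
  · exact reduce0 K m J i hm hi hTe hTf hEe hEf hx hne

theorem reduce2
    (hi : i ∉ J)
    (hTf : ∀ n, T (b (Sum.inr i)) n ∈ K)
    (hEf : ∀ j, idx j ∈ J → ∀ n, E (b j) (b (Sum.inr i)) n ∈ K)
    {y : V g} (hs : ∀ j, idx j ∉ J → idx j ≠ i → y j = 0)
    (h1 : y (Sum.inl i) = 1) :
    ∃ k ∈ K, act k y = b (Sum.inl i) ∧ act k (b (Sum.inr i)) = b (Sum.inr i) := by
  classical
  let w : V g := fun j => if idx j ∈ J then y j else 0
  have hw : ∀ j, idx j ∉ J → w j = 0 := fun j hj => by simp [w, hj]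
  obtain ⟨ho, hE⟩ := E_mem K 1 (b (Sum.inr i)) J (fun n _ => hTf n)
    (fun j hj => ⟨om_bb (fun h => hi (by rw [h] at hj; exact hj)), fun n _ => hEf j hj n⟩) w hw
  have hact := act_E ho 1 y
  have hfe : om (b (Sum.inr i)) (b (Sum.inl i)) = -1 := by rw [om_comm, om_ef]
  obtain ⟨a, hxa⟩ : ∃ a : ℤ, act (E w (b (Sum.inr i)) 1) y =
      b (Sum.inl i) + a • b (Sum.inr i) := by
    refine ⟨y (Sum.inr i) + om w y, ?_⟩
    rw [hact]
    ext j
    simp only [Pi.add_apply, Pi.smul_apply, smul_eq_mul, om_inr, h1]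
    by_cases hj : idx j ∈ J
    · have hne : idx j ≠ i := fun h => hi (h ▸ hj)
      rw [b_idx (j := Sum.inl i) (by simpa using hne), b_idx (j := Sum.inr i) (by simpa using hne)]
      simp only [w, hj, if_true]
      ring
    · rw [hw j hj]
      by_cases hne : idx j = i
      · cases j with
        | inl k =>
          simp at hne; subst hne
          rw [b_self, b_ne (j := Sum.inr k) (by simp), h1]; ring
        | inr k =>
          simp at hne; subst hne
          rw [b_self, b_ne (j := Sum.inl k) (by simp)]; ring
      · rw [b_idx (j := Sum.inl i) (by simpa using hne),
          b_idx (j := Sum.inr i) (by simpa using hne), hs j hj hne]; ring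
  refine ⟨T (b (Sum.inr i)) a * E w (b (Sum.inr i)) 1, mul_mem (hTf _) (hE 1 dvd_rfl), ?_, ?_⟩
  · rw [act_mul, hxa, act_T]
    simp only [om_add_right, om_smul_right, om_self, hfe]
    ext j
    simp only [Pi.add_apply, Pi.smul_apply, smul_eq_mul]
    ring
  · rw [act_mul, act_E ho, act_T]
    simp [ho]

end Reduce

/-- pointwise stabilizer of the hyperbolic pairs with index in `S` -/
def Fix (S : Set (Fin g)) : Subgroup (Sp g) where
  carrier := {σ | ∀ j, idx j ∈ S → act σ (b j) = b j}
  one_mem' := fun j _ => by simp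
  mul_mem' := fun {σ τ} hσ hτ j hj => by rw [act_mul, hτ j hj, hσ j hj]
  inv_mem' := fun {σ} hσ j hj => by
    conv_lhs => rw [← hσ j hj]
    rw [act_inv_act]

theorem mem_Fix {S : Set (Fin g)} {σ : Sp g} :
    σ ∈ Fix S ↔ ∀ j, idx j ∈ S → act σ (b j) = b j := Iff.rfl

theorem T_fix {S : Set (Fin g)} {j : Fin g ⊕ Fin g} (hj : idx j ∉ S) (n : ℤ) :
    T (b j) n ∈ Fix S := by
  intro k hk
  rw [act_T, om_bb (j := j) (k := k) (fun h => hj (h ▸ hk))]; simp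

theorem E_fix {S : Set (Fin g)} {i j : Fin g ⊕ Fin g} (hi : idx i ∉ S) (hj : idx j ∉ S)
    (hij : idx i ≠ idx j) (n : ℤ) : E (b i) (b j) n ∈ Fix S := by
  intro k hk
  rw [act_E (om_bb hij), om_bb (j := j) (k := k) (fun h => hj (h ▸ hk)), om_bb (j := i) (k := k) (fun h => hi (h ▸ hk))]; simp

theorem coord_zero {S : Set (Fin g)} {σ : Sp g} (hσ : σ ∈ Fix S) {i j : Fin g ⊕ Fin g}
    (hi : idx i ∉ S) (hj : idx j ∈ S) : act σ (b i) j = 0 := by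
  have h1 : om (b j.swap) (act σ (b i)) = 0 := by
    rw [← hσ j.swap (by simpa using hj), om_act]
    exact om_bb (fun h => hi (by rw [← h]; simpa using hj))
  rcases om_b j.swap (act σ (b i)) with h | h <;> rw [h1, Sum.swap_swap] at h <;> omega

theorem step (K : Subgroup (Sp g)) (m : ℤ) (hm : m = 1 ∨ m = 2) (S : Set (Fin g)) (i : Fin g)
    (hi : i ∉ S)
    (hTe : ∀ n, m ∣ n → T (b (Sum.inl i)) n ∈ K)
    (hTf : ∀ n, T (b (Sum.inr i)) n ∈ K)
    (hEe : ∀ j, idx j ∉ S → idx j ≠ i → ∀ n, m ∣ n → E (b j) (b (Sum.inl i)) n ∈ K)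
    (hEf : ∀ j, idx j ∉ S → idx j ≠ i → ∀ n, E (b j) (b (Sum.inr i)) n ∈ K)
    (σ : Sp g) (hσ : σ ∈ Fix S)
    (hdvd : ∀ j, j ≠ Sum.inr i → m ∣ act σ (b (Sum.inr i)) j)
    (hodd : m = 2 → ¬ 2 ∣ act σ (b (Sum.inr i)) (Sum.inr i)) :
    ∃ k ∈ K, k * σ ∈ Fix (insert i S) := by
  let J : Set (Fin g) := {j | j ∉ S ∧ j ≠ i}
  have hiJ : i ∉ J := fun h => h.2 rfl
  have hJ : ∀ j, j ∉ J → j ≠ i → j ∈ S := by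
    intro j h1 h2
    by_contra h
    exact h1 ⟨h, h2⟩
  have hTe' : ∀ n, m ∣ n → T (b (Sum.inl i)) n ∈ K ⊓ Fix S :=
    fun n hn => ⟨hTe n hn, T_fix hi n⟩
  have hTf' : ∀ n, T (b (Sum.inr i)) n ∈ K ⊓ Fix S := fun n => ⟨hTf n, T_fix hi n⟩
  have hEe' : ∀ j, idx j ∈ J → ∀ n, m ∣ n → E (b j) (b (Sum.inl i)) n ∈ K ⊓ Fix S :=
    fun j hj n hn => ⟨hEe j hj.1 hj.2 n hn, E_fix (j := Sum.inl i) hj.1 hi hj.2 n⟩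
  have hEf' : ∀ j, idx j ∈ J → ∀ n, E (b j) (b (Sum.inr i)) n ∈ K ⊓ Fix S :=
    fun j hj n => ⟨hEf j hj.1 hj.2 n, E_fix (j := Sum.inr i) hj.1 hi hj.2 n⟩
  obtain ⟨k1, ⟨hk1, hk1'⟩, h1⟩ := reduce (K ⊓ Fix S) m J i hm hiJ hTe' hTf' hEe' hEf'
    (x := act σ (b (Sum.inr i)))
    ⟨fun j hj hj' => coord_zero hσ hi (hJ _ hj hj'), hdvd, hodd,
      ⟨act σ (-1 • b (Sum.inl i)), by rw [om_act, om_smul_right, om_comm, om_ef]; rfl⟩⟩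
  have hσ1 : k1 * σ ∈ Fix S := mul_mem hk1' hσ
  rw [← act_mul] at h1
  obtain ⟨k2, ⟨hk2, hk2'⟩, h2, h3⟩ := reduce2 (K ⊓ Fix S) J i hiJ hTf' hEf'
    (y := act (k1 * σ) (b (Sum.inl i)))
    (fun j hj hj' => coord_zero hσ1 hi (hJ _ hj hj'))
    (by
      have := om_act (k1 * σ) (b (Sum.inr i)) (b (Sum.inl i))
      rw [h1, om_inr, om_inr, b_self] at this
      omega)
  refine ⟨k2 * k1, mul_mem hk2 hk1, ?_⟩
  rw [mul_assoc]
  intro j hj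
  rcases hj with hj | hj
  · cases j with
    | inl k => simp at hj; subst hj; rw [act_mul, h2]
    | inr k => simp at hj; subst hj; rw [act_mul, h1, h3]
  · exact mul_mem hk2' hσ1 j hj

theorem fix_all (σ : Sp g) (h : σ ∈ Fix (Set.univ : Set (Fin g))) : σ = 1 := by
  apply Subtype.ext
  apply Matrix.ext_of_mulVec_single
  intro j
  have := h j (Set.mem_univ _)
  exact this.trans (act_one (b j)).symm

section Final

variable (hg1 : 1 ≤ g)

/-- the extra generator -/
def tau : Sp g := T (b (Sum.inl (lst hg1))) 2

theorem tau_mem : tau hg1 ∈ GammaP2 g hg1 := T_gamma hg1 (dvd_mul_right _ _)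

def tauG : GammaP2 g hg1 := ⟨tau hg1, tau_mem hg1⟩

def Ksub : Subgroup (Sp g) :=
  ((Subgroup.zpowers (Abelianization.of (tauG hg1))).comap Abelianization.of).map
    (GammaP2 g hg1).subtype

theorem N_le_K : Nsub (GammaP2 g hg1) ≤ Ksub hg1 := by
  apply Subgroup.map_mono
  intro x hx
  rw [MonoidHom.mem_ker] at hx
  rw [Subgroup.mem_comap, hx]
  exact one_mem _

theorem K_le : Ksub hg1 ≤ GammaP2 g hg1 := by
  rintro _ ⟨x, _, rfl⟩
  exact x.2

theorem tau_K : tau hg1 ∈ Ksub hg1 :=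
  ⟨tauG hg1, Subgroup.mem_zpowers _, rfl⟩

theorem free_mem (hg : 4 ≤ g) : ∀ N : ℕ, ∀ S : Finset (Fin g), Sᶜ.card = N → lst hg1 ∈ S →
    ∀ σ : Sp g, σ ∈ Fix (S : Set (Fin g)) → σ ∈ Ksub hg1 := by
  intro N
  induction N with
  | zero =>
    intro S hS _ σ hσ
    rw [Finset.card_eq_zero, Finset.compl_eq_empty_iff] at hS
    subst hS
    rw [fix_all σ (by simpa using hσ)]
    exact one_mem _
  | succ N ih =>
    intro S hS hL σ hσ
    obtain ⟨i, hi⟩ : ∃ i, i ∈ Sᶜ := Finset.card_pos.1 (by omega)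
    have hi' : i ∉ S := by simpa using hi
    have hne : ∀ j, j ∉ S → j ≠ lst hg1 := fun j hj h => hj (h ▸ hL)
    obtain ⟨k, hk, hk'⟩ := step (Ksub hg1) 1 (Or.inl rfl) (S : Set (Fin g)) i (by simpa using hi')
      (fun n _ => N_le_K hg1 (N4 hg1 hg (om_v hg1 (j := Sum.inl i) (hne i hi')) n))
      (fun n => N_le_K hg1 (N4 hg1 hg (om_v hg1 (j := Sum.inr i) (hne i hi')) n))
      (fun j hj hj' n _ => N_le_K hg1 (N1 hg1 hg hj' (hne _ (by simpa using hj))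
        (om_v hg1 (j := Sum.inl i) (hne i hi')) n))
      (fun j hj hj' n => N_le_K hg1 (N1 hg1 hg hj' (hne _ (by simpa using hj))
        (om_v hg1 (j := Sum.inr i) (hne i hi')) n))
      σ hσ (fun _ _ => one_dvd _) (by norm_num)
    have h := ih (insert i S) (by
      have h1 := Finset.card_compl S
      have h2 := Finset.card_compl (insert i S)
      rw [Finset.card_insert_of_notMem hi'] at h2
      omega) (Finset.mem_insert_of_mem hL) (k * σ) (by rw [Finset.coe_insert]; exact hk')
    exact (Subgroup.mul_mem_cancel_left _ hk).1 h

theorem gamma_le (hg : 4 ≤ g) : GammaP2 g hg1 ≤ Ksub hg1 := by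
  intro σ hσ
  rw [mem_gamma] at hσ
  have hv : om (b (Sum.inr (lst hg1))) (b (Sum.inr (lst hg1))) = 0 := by simp
  obtain ⟨k, hk, hk'⟩ := step (Ksub hg1) 2 (Or.inr rfl) ∅ (lst hg1) (by simp)
    (by
      rintro n ⟨c, rfl⟩
      rw [← T_pow]
      exact zpow_mem (tau_K hg1) c)
    (fun n => N_le_K hg1 (N4 hg1 hg hv n))
    (fun j _ hj n hn => N_le_K hg1 (N3 hg1 hg hj hn))
    (fun j _ hj n => N_le_K hg1 (N1 hg1 hg hj hj hv n))
    σ (fun j hj => absurd hj (by simp))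
    (fun j hj => by
      have := hσ j
      rw [Pi.sub_apply, b_ne hj] at this
      simpa using this)
    (fun _ => by
      have := hσ (Sum.inr (lst hg1))
      rw [Pi.sub_apply, b_self] at this
      omega)
  have h := free_mem hg1 hg _ {lst hg1} rfl (by simp) (k * σ) (by simpa using hk')
  exact (Subgroup.mul_mem_cancel_left _ hk).1 h

theorem ab_zpow (hg : 4 ≤ g) (x : Abelianization (GammaP2 g hg1)) :
    ∃ n : ℤ, Abelianization.of (tauG hg1) ^ n = x := by
  obtain ⟨σ, rfl⟩ : ∃ σ, Abelianization.of σ = x := QuotientGroup.mk_surjective x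
  obtain ⟨σ', h, h'⟩ := gamma_le hg1 hg σ.2
  have : σ' = σ := Subtype.ext h'
  subst this
  exact h

theorem ab_sq (hg : 4 ≤ g) : Abelianization.of (tauG hg1) ^ 2 = 1 := by
  obtain ⟨σ', h, h'⟩ := N5 hg1 hg
  have h1 : tauG hg1 ^ 2 = σ' := by
    apply Subtype.ext
    refine Eq.trans ?_ h'.symm
    rw [SubmonoidClass.coe_pow, pow_two]
    exact T_mul _ _ _
  rw [← map_pow, h1]
  exact h

theorem gamma_entry (σ : GammaP2 g hg1) (k : Fin g ⊕ Fin g) :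
    (2 : ℤ) ∣ act σ.1 (b (Sum.inr (lst hg1))) k - b (Sum.inr (lst hg1)) k :=
  (mem_gamma hg1 σ.1).1 σ.2 k

/-- half of the `(A_g, B_g)` entry -/
def ent (σ : Sp g) : ℤ := act σ (b (Sum.inr (lst hg1))) (Sum.inl (lst hg1))

theorem ent_even (σ : GammaP2 g hg1) : 2 ∣ ent hg1 σ.1 := by
  have := gamma_entry hg1 σ (Sum.inl (lst hg1))
  rwa [b_ne (by simp), sub_zero] at this

theorem ent_mul (σ τ : GammaP2 g hg1) :
    (4 : ℤ) ∣ ent hg1 (σ * τ).1 - (ent hg1 σ.1 + ent hg1 τ.1) := by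
  set v := b (Sum.inr (lst hg1)) with hv
  -- entries expressed by the form
  have hent : ∀ ρ : Sp g, ent hg1 ρ = - om v (act ρ v) := by
    intro ρ; rw [hv, om_inr]; simp [ent]
  choose z hz using gamma_entry hg1 τ
  have hτ : act τ.1 v = v + (2 : ℤ) • z := by
    ext k
    have := hz k
    simp only [Pi.add_apply, Pi.smul_apply, smul_eq_mul]
    linarith
  choose y hy using gamma_entry hg1 σ⁻¹
  have hσ : act (σ.1)⁻¹ v = v + (2 : ℤ) • y := by
    ext k
    have := hy k
    simp only [Pi.add_apply, Pi.smul_apply, smul_eq_mul]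
    have h3 : ((σ⁻¹ : GammaP2 g hg1)).1 = (σ.1)⁻¹ := rfl
    rw [h3] at this
    linarith
  have h1 : om v (act σ.1 z) = om v z + 2 * om y z := by
    have := om_act σ.1 (act (σ.1)⁻¹ v) z
    rw [act_act_inv, hσ] at this
    rw [this]; simp only [om_add_left, om_smul_left]
  have h2 : ((σ * τ : GammaP2 g hg1)).1 = σ.1 * τ.1 := rfl
  rw [hent, hent, hent, h2, act_mul, hτ]
  simp only [act_add, act_smul, om_add_right, om_smul_right, om_self, h1]
  exact ⟨- om y z, by ring⟩

def phi : GammaP2 g hg1 →* Multiplicative (ZMod 2) :=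
  MonoidHom.mk' (fun σ => Multiplicative.ofAdd ((ent hg1 σ.1 / 2 : ℤ) : ZMod 2)) (by
    intro σ τ
    rw [← ofAdd_add, ← Int.cast_add]
    congr 1
    rw [ZMod.intCast_eq_intCast_iff]
    have h1 := ent_even hg1 σ
    have h2 := ent_even hg1 τ
    have h3 := ent_mul hg1 σ τ
    rw [Int.ModEq]
    omega)

theorem phi_tau : phi hg1 (tauG hg1) = Multiplicative.ofAdd 1 := by
  have : ent hg1 (tauG hg1).1 = 2 := by
    show act (T _ 2) _ _ = _
    rw [act_T]
    simp [b_self, b_ne]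
  show Multiplicative.ofAdd ((ent hg1 (tauG hg1).1 / 2 : ℤ) : ZMod 2) = _
  rw [this]; rfl

theorem main (hg : 4 ≤ g) :
    Nonempty (Abelianization (GammaP2 g hg1) ≃* Multiplicative (ZMod 2)) := by
  let f := Abelianization.lift (phi hg1)
  have hf : ∀ n : ℤ, f (Abelianization.of (tauG hg1) ^ n) = Multiplicative.ofAdd (n : ZMod 2) := by
    intro n
    rw [map_zpow, Abelianization.lift_apply_of, phi_tau, ← ofAdd_zsmul]
    simp
  refine ⟨MulEquiv.ofBijective f ⟨?_, ?_⟩⟩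
  · rw [injective_iff_map_eq_one]
    intro x hx
    obtain ⟨n, rfl⟩ := ab_zpow hg1 hg x
    rw [hf] at hx
    have h0 : ((n : ℤ) : ZMod 2) = 0 := hx
    rw [ZMod.intCast_zmod_eq_zero_iff_dvd] at h0
    obtain ⟨c, rfl⟩ := h0
    rw [_root_.zpow_mul]
    have := ab_sq hg1 hg
    have h2 : Abelianization.of (tauG hg1) ^ (((2 : ℕ) : ℤ)) = 1 := by
      rw [zpow_natCast]; exact this
    rw [h2, _root_.one_zpow]
  · intro y
    obtain ⟨n, hn⟩ := ZMod.intCast_surjective (Multiplicative.toAdd y)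
    exact ⟨_, (hf n).trans (by rw [hn]; rfl)⟩

end Final

end SpAux

/-- for `g ≥ 4`, the abelianization of `Γ_g(p₂)` (equivalently, its first
integral group homology `H₁(Γ_g(p₂);ℤ)`) is a cyclic group of order 2. -/
theorem stmt8 (g : ℕ) (hg : 4 ≤ g) :
    Nonempty (Abelianization (GammaP2 g (by omega)) ≃* Multiplicative (ZMod 2)) := by
  exact SpAux.main _ hg
end

section
/- Let g ≥ 1, let σ ∈ Γ_g(p₂), let m̃ = (m̃′|m̃″) ∈ ℤ^{2(g−1)}, and set m := (m̃′,0 | m̃″,1) and n := (m̃′,0 | m̃″,0) in ℤ^{2g}. Then: (1) σ·m − σ·n ≡ m − n (mod 2), i.e. σ·m − σ·n is congruent mod 2 to the row vector with a single 1 in the last coordinate; and (2) the g-th coordinates of the first halves of σ·m and σ·n are even, i.e. (σ·m)′_g ≡ (σ·n)′_g ≡ (ᵗβα)_{gg} ≡ 0 (mod 2), where β, α are the blocks of σ. -/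
/-- The action `σ·m` of a symplectic matrix `σ` (in `g×g` blocks `(α β; γ δ)`, where
`Sum.inl` indexes the first half and `Sum.inr` the second half) on a `g`-characteristic
`m = (m′|m″) ∈ ℤ^{2g}`:
`σ·m := m·[[ᵗα, −ᵗγ],[−ᵗβ, ᵗδ]] + ((ᵗβα)₀ | (ᵗδγ)₀)`,
where `M₀` is the row vector of diagonal entries of `M`. -/
def charAction {g : ℕ} (σ : Matrix (Fin g ⊕ Fin g) (Fin g ⊕ Fin g) ℤ)
    (m : Fin g ⊕ Fin g → ℤ) : Fin g ⊕ Fin g → ℤ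
  | Sum.inl j =>
      (∑ i : Fin g, m (Sum.inl i) * σ (Sum.inl j) (Sum.inl i))
      - (∑ i : Fin g, m (Sum.inr i) * σ (Sum.inl j) (Sum.inr i))
      + ∑ k : Fin g, σ (Sum.inl k) (Sum.inr j) * σ (Sum.inl k) (Sum.inl j)
  | Sum.inr j =>
      -(∑ i : Fin g, m (Sum.inl i) * σ (Sum.inr j) (Sum.inl i))
      + (∑ i : Fin g, m (Sum.inr i) * σ (Sum.inr j) (Sum.inr i))
      + ∑ k : Fin g, σ (Sum.inr k) (Sum.inr j) * σ (Sum.inr k) (Sum.inl j)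

/-- Extension of a `(g-1)`-characteristic `m̃ = (m̃′|m̃″)` to the `g`-characteristic
`(m̃′,0 | m̃″,c)`, whose last first-half coordinate is `0` and whose last second-half
coordinate is `c`. -/
def extChar {g : ℕ} (c : ℤ) (mt : Fin (g - 1) ⊕ Fin (g - 1) → ℤ) : Fin g ⊕ Fin g → ℤ
  | Sum.inl i => if h : (i : ℕ) < g - 1 then mt (Sum.inl ⟨i, h⟩) else 0
  | Sum.inr i => if h : (i : ℕ) < g - 1 then mt (Sum.inr ⟨i, h⟩) else c

/-- The projection `π : ℤ^{2g} → ℤ^{2g-2}` deleting the `g`-th and `2g`-th coordinates. -/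
def projChar {g : ℕ} (m : Fin g ⊕ Fin g → ℤ) : Fin (g - 1) ⊕ Fin (g - 1) → ℤ
  | Sum.inl i => m (Sum.inl (Fin.castLE (Nat.sub_le g 1) i))
  | Sum.inr i => m (Sum.inr (Fin.castLE (Nat.sub_le g 1) i))

theorem ext_diff {g : ℕ} (L : Fin g) (hL : (L : ℕ) = g - 1)
    (mt : Fin (g - 1) ⊕ Fin (g - 1) → ℤ) (i : Fin g) :
    extChar 1 mt (Sum.inr i) =
      extChar 0 mt (Sum.inr i) + if i = L then 1 else 0 := by
  have := i.2
  simp only [extChar, Fin.ext_iff]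
  split_ifs <;> omega

theorem row_lemma {g : ℕ} (σ : Matrix (Fin g ⊕ Fin g) (Fin g ⊕ Fin g) ℤ)
    (hσ : σ ∈ Matrix.symplecticGroup (Fin g) ℤ) (L : Fin g)
    (hfix : ∀ i : Fin g ⊕ Fin g, σ i (Sum.inr L) ≡
        (1 : Matrix (Fin g ⊕ Fin g) (Fin g ⊕ Fin g) ℤ) i (Sum.inr L) [ZMOD 2])
    (k : Fin g ⊕ Fin g) :
    σ (Sum.inl L) k ≡ (1 : Matrix (Fin g ⊕ Fin g) (Fin g ⊕ Fin g) ℤ) (Sum.inl L) k [ZMOD 2] := by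
  have h := SymplecticGroup.mem_iff'.1 hσ
  rw [Matrix.mul_assoc] at h
  have h1 := congrFun (congrFun h (Sum.inr L)) k
  rw [Matrix.mul_apply] at h1
  have h2 : (∑ i, σ.transpose (Sum.inr L) i * (Matrix.J (Fin g) ℤ * σ) i k) ≡
      ∑ i, (1 : Matrix (Fin g ⊕ Fin g) (Fin g ⊕ Fin g) ℤ) i (Sum.inr L) *
        (Matrix.J (Fin g) ℤ * σ) i k [ZMOD 2] :=
    Int.ModEq.sum fun i _ => (hfix i).mul_right _
  rw [h1] at h2
  have h3 : (∑ i, (1 : Matrix (Fin g ⊕ Fin g) (Fin g ⊕ Fin g) ℤ) i (Sum.inr L) *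
        (Matrix.J (Fin g) ℤ * σ) i k) = σ (Sum.inl L) k := by
    simp [Matrix.one_apply, Matrix.mul_apply, Matrix.J]
  have h4 : Matrix.J (Fin g) ℤ (Sum.inr L) k =
      (1 : Matrix (Fin g ⊕ Fin g) (Fin g ⊕ Fin g) ℤ) (Sum.inl L) k := by
    cases k <;> simp [Matrix.J, Matrix.one_apply]
  rw [h3, h4] at h2
  exact h2.symm

/-- let `g ≥ 1`, `σ ∈ Γ_g(p₂)` (a symplectic matrix fixing `e_{2g}`
modulo 2), `m̃ ∈ ℤ^{2(g-1)}`, and set `m := (m̃′,0|m̃″,1)`, `n := (m̃′,0|m̃″,0)`.  Then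
(1) `σ·m − σ·n ≡ m − n (mod 2)`, and (2) the `g`-th coordinates of the first halves of
`σ·m` and `σ·n`, as well as `(ᵗβα)_{gg}`, are even. -/
theorem stmt12 (g : ℕ) (hg : 1 ≤ g)
    (σ : Matrix (Fin g ⊕ Fin g) (Fin g ⊕ Fin g) ℤ)
    (hσ : σ ∈ Matrix.symplecticGroup (Fin g) ℤ)
    (hfix : ∀ i : Fin g ⊕ Fin g,
      σ i (Sum.inr ⟨g - 1, by omega⟩) ≡
        (1 : Matrix (Fin g ⊕ Fin g) (Fin g ⊕ Fin g) ℤ) i (Sum.inr ⟨g - 1, by omega⟩) [ZMOD 2])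
    (mt : Fin (g - 1) ⊕ Fin (g - 1) → ℤ) :
    (∀ k : Fin g ⊕ Fin g,
      charAction σ (extChar 1 mt) k - charAction σ (extChar 0 mt) k ≡
        extChar 1 mt k - extChar 0 mt k [ZMOD 2]) ∧
    charAction σ (extChar 1 mt) (Sum.inl ⟨g - 1, by omega⟩) ≡ 0 [ZMOD 2] ∧
    charAction σ (extChar 0 mt) (Sum.inl ⟨g - 1, by omega⟩) ≡ 0 [ZMOD 2] ∧
    (∑ k : Fin g, σ (Sum.inl k) (Sum.inr ⟨g - 1, by omega⟩) *
        σ (Sum.inl k) (Sum.inl ⟨g - 1, by omega⟩)) ≡ 0 [ZMOD 2] := by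
  have hrow := row_lemma σ hσ ⟨g - 1, by omega⟩ hfix
  have hlast : (∑ k : Fin g, σ (Sum.inl k) (Sum.inr ⟨g - 1, by omega⟩) *
        σ (Sum.inl k) (Sum.inl ⟨g - 1, by omega⟩)) ≡ 0 [ZMOD 2] := by
    have h := Int.ModEq.sum (s := Finset.univ) fun (k : Fin g) _ =>
      (hfix (Sum.inl k)).mul_right (σ (Sum.inl k) (Sum.inl ⟨g - 1, by omega⟩))
    simpa using h
  have hev : ∀ c : ℤ,
      charAction σ (extChar c mt) (Sum.inl ⟨g - 1, by omega⟩) ≡ 0 [ZMOD 2] := by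
    intro c
    have ha := Int.ModEq.sum (s := Finset.univ) fun (k : Fin g) _ =>
      (hrow (Sum.inl k)).mul_left (extChar c mt (Sum.inl k))
    have hb := Int.ModEq.sum (s := Finset.univ) fun (k : Fin g) _ =>
      (hrow (Sum.inr k)).mul_left (extChar c mt (Sum.inr k))
    have h := (ha.sub hb).add hlast
    refine Int.ModEq.trans h ?_
    simp [Matrix.one_apply, extChar]
  refine ⟨?_, hev 1, hev 0, hlast⟩
  have hl : ∀ i : Fin g, extChar 1 mt (Sum.inl i) = extChar 0 mt (Sum.inl i) := fun _ => rfl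
  rintro (j | j)
  · have h := (hfix (Sum.inl j)).neg
    simp only [charAction, ext_diff ⟨g - 1, by omega⟩ rfl, hl, add_mul, Finset.sum_add_distrib]
    simpa using h
  · have h := hfix (Sum.inr j)
    simp only [charAction, ext_diff ⟨g - 1, by omega⟩ rfl, hl, add_mul, Finset.sum_add_distrib]
    simpa [Matrix.one_apply] using h
end

section
/- Let g ≥ 4. The coinvariant module (B³)_{Γ̄} of the degree-≤3 boolean polynomials under the stabilizer Γ̄ of B_g in Sp(2g,ℤ/2ℤ) is a one-dimensional ℤ/2ℤ-vector space, generated by the image of the element Ā₁B̄₁Ā_g. (Via the Birman–Craggs–Johnson homomorphism this computes H₁(I_{g,1};ℤ)_{M_{g,1}(p₂)} ≅ ℤ/2ℤ, the coinvariants of the abelianized Torelli group.) -/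
open MvPolynomial

/-- `V = (ℤ/2ℤ)^{2g}`, with standard basis `A_i = Pi.single (Sum.inl i) 1` and
`B_i = Pi.single (Sum.inr i) 1`. -/
abbrev VV (g : ℕ) := Fin g ⊕ Fin g → ZMod 2

/-- The mod 2 intersection (symplectic) form on `V`, with `A_i · B_i = 1` and all other
pairings of basis vectors zero. -/
def symF {g : ℕ} (x y : VV g) : ZMod 2 :=
  ∑ i : Fin g, (x (Sum.inl i) * y (Sum.inr i) + x (Sum.inr i) * y (Sum.inl i))

/-- The ideal of relations defining the algebra of boolean polynomials:
`(x+y)‾ = x̄ + ȳ + (x·y)·1` and `x̄² = x̄`. -/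
noncomputable def boolRel (g : ℕ) : Ideal (MvPolynomial (VV g) (ZMod 2)) :=
  Ideal.span
    ({q | ∃ x y : VV g, q = X (x + y) - X x - X y - C (symF x y)} ∪
     {q | ∃ x : VV g, q = X x ^ 2 - X x})

/-- The algebra of boolean polynomials on `V`. -/
abbrev BoolPoly (g : ℕ) := MvPolynomial (VV g) (ZMod 2) ⧸ boolRel g

/-- The generator `x̄` of the boolean algebra, for `x ∈ V`. -/
noncomputable def bgen {g : ℕ} (x : VV g) : BoolPoly g := Ideal.Quotient.mk (boolRel g) (X x)

/-- `B^n`: the subspace of boolean polynomials of degree at most `n`, spanned by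
products of at most `n` generators. -/
noncomputable def BoolDeg (g n : ℕ) : Submodule (ZMod 2) (BoolPoly g) :=
  Submodule.span (ZMod 2) {b | ∃ l : List (VV g), l.length ≤ n ∧ b = (l.map bgen).prod}

/-- A linear automorphism of `V` preserving the symplectic form induces a ring
endomorphism of the boolean algebra, `x̄ ↦ (f x)‾`. -/
noncomputable def actB {g : ℕ} (f : VV g ≃ₗ[ZMod 2] VV g)
    (hf : ∀ x y : VV g, symF (f x) (f y) = symF x y) : BoolPoly g →+* BoolPoly g :=
  Ideal.Quotient.lift (boolRel g)
    ((Ideal.Quotient.mk (boolRel g)).comp (rename (⇑f)).toRingHom)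
    (by
      have hle : boolRel g ≤ Ideal.comap (rename (⇑f)).toRingHom (boolRel g) := by
        rw [boolRel, Ideal.span_le]
        rintro q (⟨x, y, rfl⟩ | ⟨x, rfl⟩)
        · have : (rename (⇑f)) (X (x + y) - X x - X y - C (symF x y)) =
              X (f x + f y) - X (f x) - X (f y) - C (symF (f x) (f y)) := by
            simp [map_add, hf x y]
          refine Ideal.mem_comap.mpr ?_
          simp only [AlgHom.toRingHom_eq_coe, RingHom.coe_coe, this]
          exact Ideal.subset_span (Or.inl ⟨f x, f y, rfl⟩)
        · refine Ideal.mem_comap.mpr ?_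
          have : (rename (⇑f)) (X x ^ 2 - X x) =
              (X (f x) ^ 2 - X (f x) : MvPolynomial (VV g) (ZMod 2)) := by simp
          simp only [AlgHom.toRingHom_eq_coe, RingHom.coe_coe, this]
          exact Ideal.subset_span (Or.inr ⟨f x, rfl⟩)
      intro a ha
      rw [RingHom.comp_apply, Ideal.Quotient.eq_zero_iff_mem]
      exact Ideal.mem_comap.mp (hle ha))

/-- The subspace of `B` spanned by the elements `γ·m − m` for `γ ∈ Γ̄` (a linear
automorphism of `V` preserving the symplectic form and fixing `B_g`) and `m ∈ B³`;
the coinvariant module `(B³)_Γ̄` is the quotient of `B³` by this subspace. -/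
noncomputable def coinvRel (g : ℕ) (hg1 : 1 ≤ g) : Submodule (ZMod 2) (BoolPoly g) :=
  Submodule.span (ZMod 2)
    {b | ∃ (f : VV g ≃ₗ[ZMod 2] VV g) (hf : ∀ x y : VV g, symF (f x) (f y) = symF x y),
      f (Pi.single (Sum.inr (⟨g - 1, by omega⟩ : Fin g)) 1) =
        Pi.single (Sum.inr (⟨g - 1, by omega⟩ : Fin g)) 1 ∧
      ∃ m ∈ BoolDeg g 3, b = actB f hf m - m}


section helpers

variable {g : ℕ}

lemma z2_cases (c : ZMod 2) : c = 0 ∨ c = 1 := by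
  revert c; decide

lemma symF_add_left (x y z : VV g) : symF (x + y) z = symF x z + symF y z := by
  simp only [symF, Pi.add_apply, ← Finset.sum_add_distrib]
  exact Finset.sum_congr rfl fun i _ => by ring

lemma symF_comm (x y : VV g) : symF x y = symF y x := by
  simp only [symF]
  exact Finset.sum_congr rfl fun i _ => by ring

lemma symF_add_right (x y z : VV g) : symF x (y + z) = symF x y + symF x z := by
  rw [symF_comm, symF_add_left, symF_comm y, symF_comm z]

lemma symF_smul_left (c : ZMod 2) (x y : VV g) : symF (c • x) y = c * symF x y := by
  simp only [symF, Pi.smul_apply, smul_eq_mul, Finset.mul_sum]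
  exact Finset.sum_congr rfl fun i _ => by ring

lemma symF_smul_right (c : ZMod 2) (x y : VV g) : symF x (c • y) = c * symF x y := by
  rw [symF_comm, symF_smul_left, symF_comm]

lemma symF_self (x : VV g) : symF x x = 0 := by
  simp only [symF]
  refine Finset.sum_eq_zero fun i _ => ?_
  rw [mul_comm]; exact CharTwo.add_self_eq_zero _

lemma symF_single (k : Fin g ⊕ Fin g) (x : VV g) :
    symF (Pi.single k 1) x = x k.swap := by
  rcases k with k | k <;> simp [symF, Pi.single_apply, Sum.inl.injEq, Sum.inr.injEq]

lemma symF_single_single (k l : Fin g ⊕ Fin g) :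
    symF (Pi.single k 1) (Pi.single l 1 : VV g) = if k.swap = l then 1 else 0 := by
  rw [symF_single, Pi.single_apply]

lemma bgen_add (x y : VV g) :
    bgen (x + y) = bgen x + bgen y + algebraMap (ZMod 2) (BoolPoly g) (symF x y) := by
  have h : Ideal.Quotient.mk (boolRel g) (X (x + y) - X x - X y - C (symF x y)) = 0 :=
    Ideal.Quotient.eq_zero_iff_mem.mpr (Ideal.subset_span (Or.inl ⟨x, y, rfl⟩))
  simp only [map_sub] at h
  have h2 : algebraMap (ZMod 2) (BoolPoly g) (symF x y)
      = Ideal.Quotient.mk (boolRel g) (C (symF x y)) := rfl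
  rw [h2]
  unfold bgen
  linear_combination h

lemma bgen_mul_self (x : VV g) : bgen x * bgen x = bgen x := by
  have h : Ideal.Quotient.mk (boolRel g) (X x ^ 2 - X x) = 0 :=
    Ideal.Quotient.eq_zero_iff_mem.mpr (Ideal.subset_span (Or.inr ⟨x, rfl⟩))
  simp only [map_sub, map_pow] at h
  unfold bgen
  linear_combination h

lemma actB_bgen (f : VV g ≃ₗ[ZMod 2] VV g)
    (hf : ∀ x y : VV g, symF (f x) (f y) = symF x y) (x : VV g) :
    actB f hf (bgen x) = bgen (f x) := by
  simp [actB, bgen]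

/-- The transvection along `v`. -/
def transv (v : VV g) : VV g ≃ₗ[ZMod 2] VV g :=
  LinearEquiv.ofInvolutive
    { toFun := fun x => x + symF x v • v
      map_add' := fun x y => by rw [symF_add_left, add_smul]; abel
      map_smul' := fun c x => by simp [symF_smul_left, smul_add, mul_smul] }
    (fun x => by
      simp only [LinearMap.coe_mk, AddHom.coe_mk, symF_add_left, symF_smul_left, symF_self,
        mul_zero, add_zero]
      rw [add_assoc, ZModModule.add_self, add_zero])

lemma transv_apply (v x : VV g) : transv v x = x + symF x v • v := rfl

lemma transv_symF (v x y : VV g) : symF (transv v x) (transv v y) = symF x y := by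
  simp only [transv_apply, symF_add_left, symF_add_right, symF_smul_left, symF_smul_right,
    symF_self, symF_comm v y]
  have := CharTwo.add_self_eq_zero (symF x v * symF y v)
  linear_combination this

lemma triple_mem (x y z : VV g) : bgen x * bgen y * bgen z ∈ BoolDeg g 3 :=
  Submodule.subset_span ⟨[x, y, z], by simp, by simp [mul_assoc]⟩

lemma exists_symF_one {v : VV g} (hv : v ≠ 0) : ∃ w, symF w v = 1 := by
  obtain ⟨k, hk⟩ := Function.ne_iff.mp hv
  refine ⟨Pi.single k.swap 1, ?_⟩
  rw [symF_single, Sum.swap_swap]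
  exact (z2_cases _).resolve_left hk

lemma exists_perp (hg : 4 ≤ g) (a : Fin 5 → VV g) : ∃ v : VV g, v ≠ 0 ∧ ∀ i, symF v (a i) = 0 := by
  let L : VV g →ₗ[ZMod 2] (Fin 5 → ZMod 2) :=
    { toFun := fun v i => symF v (a i)
      map_add' := fun x y => by ext i; simp [symF_add_left]
      map_smul' := fun c x => by ext i; simp [symF_smul_left] }
  have hk : LinearMap.ker L ≠ ⊥ := LinearMap.ker_ne_bot_of_finrank_lt (by simp; omega)
  obtain ⟨v, hv, hv0⟩ := Submodule.exists_mem_ne_zero_of_ne_bot hk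
  exact ⟨v, hv0, fun i => congrFun (LinearMap.mem_ker.mp hv) i⟩

lemma vv_induction (P : VV g → Prop) (h0 : P 0) (hadd : ∀ x y, P x → P y → P (x + y))
    (hs : ∀ k, P (Pi.single k 1)) (x : VV g) : P x := by
  have hx : x ∈ Submodule.span (ZMod 2) (Set.range (Pi.basisFun (ZMod 2) (Fin g ⊕ Fin g))) := by
    rw [Module.Basis.span_eq]; trivial
  induction hx using Submodule.span_induction with
  | mem x h => obtain ⟨k, rfl⟩ := h; simpa using hs k
  | zero => exact h0
  | add x y _ _ h1 h2 => exact hadd x y h1 h2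
  | smul c x _ h =>
    rcases z2_cases c with rfl | rfl
    · simpa using h0
    · simpa using h

/-- the class of a triple product -/
noncomputable def F3 (S : Submodule (ZMod 2) (BoolPoly g)) (x y z : VV g) : BoolPoly g ⧸ S :=
  S.mkQ (bgen x * bgen y * bgen z)

lemma F3_comm12 (S : Submodule (ZMod 2) (BoolPoly g)) (x y z : VV g) :
    F3 S x y z = F3 S y x z := by
  unfold F3; congr 1; ring

lemma F3_comm23 (S : Submodule (ZMod 2) (BoolPoly g)) (x y z : VV g) :
    F3 S x y z = F3 S x z y := by
  unfold F3; congr 1; ring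

lemma F3_add (S : Submodule (ZMod 2) (BoolPoly g)) (x x' y z : VV g) :
    F3 S (x + x') y z = F3 S x y z + F3 S x' y z + symF x x' • F3 S y y z := by
  unfold F3
  rw [← map_smul, ← map_add, ← map_add]
  congr 1
  rw [bgen_add, bgen_mul_self]
  rcases z2_cases (symF x x') with h | h
  · rw [h, zero_smul, map_zero]; ring
  · rw [h, one_smul, map_one]; ring

lemma F3_transv (hg1 : 1 ≤ g) (p : Fin g) (hp : p.val = g - 1) (S : Submodule (ZMod 2) (BoolPoly g)) (hS : coinvRel g hg1 ≤ S)
    (v x y z : VV g)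
    (hv : symF v (Pi.single (Sum.inr p) 1) = 0) :
    F3 S (transv v x) (transv v y) (transv v z) = F3 S x y z := by
  obtain ⟨n, hn⟩ := p
  obtain rfl : n = g - 1 := hp
  unfold F3
  rw [← sub_eq_zero, ← map_sub, Submodule.mkQ_apply, Submodule.Quotient.mk_eq_zero]
  refine hS (Submodule.subset_span ⟨transv v, transv_symF v, ?_, _, triple_mem x y z, ?_⟩)
  · rw [transv_apply, symF_comm, hv, zero_smul, add_zero]
  · simp only [map_mul, actB_bgen]

lemma F3_star (hg1 : 1 ≤ g) (p : Fin g) (hp : p.val = g - 1) (S : Submodule (ZMod 2) (BoolPoly g)) (hS : coinvRel g hg1 ≤ S)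
    (v y z : VV g) (h0 : v ≠ 0)
    (hv : symF v (Pi.single (Sum.inr p) 1) = 0)
    (hy : symF v y = 0) (hz : symF v z = 0) :
    F3 S v y z = F3 S y y z := by
  obtain ⟨w, hw⟩ := exists_symF_one h0
  have h := F3_transv hg1 p hp S hS v w y z hv
  rw [transv_apply, transv_apply, transv_apply, symF_comm y, symF_comm z, hy, hz, hw] at h
  simp only [zero_smul, one_smul, add_zero] at h
  rw [F3_add, hw, one_smul, add_assoc, add_eq_left] at h
  rw [← sub_eq_zero, ZModModule.sub_eq_add]
  exact h

lemma F2_zero (hg1 : 1 ≤ g) (p : Fin g) (hp : p.val = g - 1) (hg : 4 ≤ g) (S : Submodule (ZMod 2) (BoolPoly g))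
    (hS : coinvRel g hg1 ≤ S) (y z : VV g) : F3 S y y z = 0 := by
  set b : VV g := Pi.single (Sum.inr p) 1 with hb
  obtain ⟨v, hv0, hv⟩ := exists_perp hg ![y, z, b, 0, 0]
  obtain ⟨l, hl⟩ := exists_symF_one hv0
  obtain ⟨w, hw0, hw⟩ := exists_perp hg ![y, z, b, v, l]
  have hvy : symF v y = 0 := hv 0
  have hvz : symF v z = 0 := hv 1
  have hvb : symF v b = 0 := hv 2
  have hwy : symF w y = 0 := hw 0
  have hwz : symF w z = 0 := hw 1
  have hwb : symF w b = 0 := hw 2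
  have hwv : symF w v = 0 := hw 3
  have hwl : symF w l = 0 := hw 4
  have hne : v + w ≠ 0 := by
    intro h
    have h2 := symF_add_left v w l
    rw [h, hwl, symF_comm v l, hl] at h2
    have h3 := symF_smul_left 0 v l
    simp only [zero_smul, zero_mul] at h3
    rw [h3] at h2
    exact absurd h2 (by decide)
  have e1 := F3_star hg1 p hp S hS v y z hv0 hvb hvy hvz
  have e2 := F3_star hg1 p hp S hS w y z hw0 hwb hwy hwz
  have e3 := F3_star hg1 p hp S hS (v + w) y z hne (by rw [symF_add_left, hvb, hwb, add_zero])
    (by rw [symF_add_left, hvy, hwy, add_zero]) (by rw [symF_add_left, hvz, hwz, add_zero])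
  rw [F3_add, e1, e2, symF_comm, hwv, zero_smul, add_zero, ZModModule.add_self] at e3
  exact e3.symm

lemma F3_all_zero (hg1 : 1 ≤ g) (p o : Fin g) (hp : p.val = g - 1) (hop : o ≠ p) (hg : 4 ≤ g) (S : Submodule (ZMod 2) (BoolPoly g))
    (hS : coinvRel g hg1 ≤ S)
    (hS0 : F3 S (Pi.single (Sum.inl o) 1)
      (Pi.single (Sum.inr o) 1)
      (Pi.single (Sum.inl p) 1) = 0) (x y z : VV g) :
    F3 S x y z = 0 := by
  have hadd : ∀ x x' y z, F3 S (x + x') y z = F3 S x y z + F3 S x' y z := fun x x' y z => by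
    rw [F3_add, F2_zero hg1 p hp hg S hS, smul_zero, add_zero]
  have hadd2 : ∀ x y y' z, F3 S x (y + y') z = F3 S x y z + F3 S x y' z := fun x y y' z => by
    rw [F3_comm12, hadd, F3_comm12, F3_comm12 S y']
  have hzero : ∀ y z, F3 S 0 y z = 0 := fun y z => by
    have := hadd 0 0 y z
    rwa [add_zero, left_eq_add] at this
  have star : ∀ k l m : Fin g ⊕ Fin g, k ≠ Sum.inl p → k.swap ≠ l → k.swap ≠ m →
      F3 S (Pi.single k 1) (Pi.single l 1) (Pi.single m 1) = 0 := by
    intro k l m hk hl hm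
    rw [F3_star hg1 p hp S hS, F2_zero hg1 p hp hg S hS]
    · simp
    · rw [symF_single_single, if_neg]
      intro h
      apply hk
      rw [← Sum.swap_swap k, h]; rfl
    · rw [symF_single_single, if_neg hl]
    · rw [symF_single_single, if_neg hm]
  have key : ∀ i : Fin g, i ≠ p →
      F3 S (Pi.single (Sum.inl i) 1) (Pi.single (Sum.inr i) 1) (Pi.single (Sum.inl p) 1) = 0 := by
    intro i hi
    by_cases hio : i = o
    · rw [hio]; exact hS0
    have h : F3 S (Pi.single (Sum.inl i) 1 + Pi.single (Sum.inl o) 1)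
        (Pi.single (Sum.inr i) 1 + Pi.single (Sum.inr o) 1) (Pi.single (Sum.inl p) 1) = 0 := by
      rw [F3_star hg1 p hp S hS, F2_zero hg1 p hp hg S hS]
      · intro h
        have := congrFun h (Sum.inl i)
        simp [hio] at this
      · rw [symF_add_left, symF_single_single, symF_single_single]
        simp [hi, hop]
      · simp only [symF_add_left, symF_add_right, symF_single_single]
        simp [hio, Ne.symm hio]; decide
      · simp only [symF_add_left, symF_single_single]
        simp
    rw [hadd, hadd2, hadd2, hS0,
      star (Sum.inl i) (Sum.inr o) (Sum.inl p) (by simpa using hi) (by simpa using hio) (by simp),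
      star (Sum.inl o) (Sum.inr i) (Sum.inl p) (by simpa using hop)
        (by simpa using Ne.symm hio) (by simp)] at h
    simpa using h
  -- pairs in order (k, k.swap, A_g)
  have key2 : ∀ k : Fin g ⊕ Fin g, k ≠ Sum.inl p → k.swap ≠ Sum.inl p →
      F3 S (Pi.single k 1) (Pi.single k.swap 1) (Pi.single (Sum.inl p) 1) = 0 := by
    rintro (i | i) h1 h2
    · exact key i (by simpa using h1)
    · rw [F3_comm12]; exact key i (by simpa using h2)
  have alt : ∀ k m : Fin g ⊕ Fin g,
      F3 S (Pi.single k 1) (Pi.single k 1) (Pi.single m 1) = 0 := fun k m =>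
    F2_zero hg1 p hp hg S hS _ _
  -- triples (k, k.swap, m), k ≠ A_g
  have key3 : ∀ k m : Fin g ⊕ Fin g, k ≠ Sum.inl p →
      F3 S (Pi.single k 1) (Pi.single k.swap 1) (Pi.single m 1) = 0 := by
    intro k m hk
    by_cases h1 : m = k
    · subst h1; rw [F3_comm23]; exact alt _ _
    by_cases h2 : m = k.swap
    · subst h2; rw [F3_comm12, F3_comm23]; exact alt _ _
    by_cases h3 : m = Sum.inl p
    · subst h3; exact key2 k hk (Ne.symm h2)
    · rw [F3_comm23, F3_comm12]
      refine star _ _ _ h3 (fun h => h2 ?_) (fun h => h1 ?_)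
      · rw [← h, Sum.swap_swap]
      · rw [← Sum.swap_swap m, h, Sum.swap_swap]
  have key4 : ∀ k l m : Fin g ⊕ Fin g, k ≠ Sum.inl p →
      F3 S (Pi.single k 1) (Pi.single l 1) (Pi.single m 1) = 0 := by
    intro k l m hk
    by_cases hl : k.swap = l
    · subst hl; exact key3 k m hk
    by_cases hm : k.swap = m
    · subst hm; rw [F3_comm23]; exact key3 k l hk
    exact star k l m hk hl hm
  have basis : ∀ k l m : Fin g ⊕ Fin g,
      F3 S (Pi.single k 1) (Pi.single l 1) (Pi.single m 1) = 0 := by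
    intro k l m
    by_cases hk : k = Sum.inl p
    · by_cases hl : l = Sum.inl p
      · rw [hk, hl]; exact alt _ _
      · rw [F3_comm12]; exact key4 _ _ _ hl
    · exact key4 _ _ _ hk
  have ind : ∀ y z : VV g, (∀ k, F3 S (Pi.single k 1) y z = 0) → ∀ x, F3 S x y z = 0 :=
    fun y z h => vv_induction _ (hzero y z) (fun x x' h1 h2 => by rw [hadd, h1, h2, add_zero]) h
  refine ind y z (fun k => ?_) x
  rw [F3_comm12]
  refine ind _ z (fun l => ?_) y
  rw [F3_comm23, F3_comm12]
  refine ind _ _ (fun m => ?_) z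
  exact basis _ _ _

lemma upper (hg1 : 1 ≤ g) (p o : Fin g) (hp : p.val = g - 1) (hop : o ≠ p) (hg : 4 ≤ g) (S : Submodule (ZMod 2) (BoolPoly g))
    (hS : coinvRel g hg1 ≤ S)
    (hS0 : bgen (Pi.single (Sum.inl o) 1) *
      bgen (Pi.single (Sum.inr o) 1) *
      bgen (Pi.single (Sum.inl p) 1) ∈ S) : BoolDeg g 3 ≤ S := by
  have h3 : ∀ x y z : VV g, bgen x * bgen y * bgen z ∈ S := fun x y z => by
    have := F3_all_zero hg1 p o hp hop hg S hS
      (by rw [F3, Submodule.mkQ_apply, Submodule.Quotient.mk_eq_zero]; exact hS0) x y z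
    rwa [F3, Submodule.mkQ_apply, Submodule.Quotient.mk_eq_zero] at this
  have h2 : ∀ x y : VV g, bgen x * bgen y ∈ S := fun x y => by
    simpa [bgen_mul_self] using h3 x x y
  have h1 : ∀ x : VV g, bgen x ∈ S := fun x => by simpa [bgen_mul_self] using h2 x x
  refine Submodule.span_le.mpr ?_
  rintro b ⟨l, hl, rfl⟩
  match l, hl with
  | [], _ =>
    have h := bgen_add (Pi.single (Sum.inl o) 1)
      (Pi.single (Sum.inr o) 1)
    rw [symF_single_single] at h
    simp only [Sum.swap_inl, if_true, map_one] at h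
    have h' := S.sub_mem (h1 (Pi.single (Sum.inl o) 1 +
      Pi.single (Sum.inr o) 1)) (S.add_mem (h1 (Pi.single (Sum.inl o) 1))
      (h1 (Pi.single (Sum.inr o) 1)))
    rw [h, add_sub_cancel_left] at h'
    simpa using h'
  | [x], _ => simpa using h1 x
  | [x, y], _ => simpa using h2 x y
  | [x, y, z], _ => simpa [mul_assoc] using h3 x y z
  | _ :: _ :: _ :: _ :: _, hl => simp at hl; omega

/-- standard quadratic form -/
def q0 (x : VV g) : ZMod 2 := ∑ i : Fin g, x (Sum.inl i) * x (Sum.inr i)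

lemma q0_add (x y : VV g) : q0 (x + y) = q0 x + q0 y + symF x y := by
  simp only [q0, symF, Pi.add_apply, ← Finset.sum_add_distrib]
  exact Finset.sum_congr rfl fun i _ => by ring

/-- evaluation at the quadratic form `q0 + symF u` -/
noncomputable def ev (u : VV g) : BoolPoly g →+* ZMod 2 :=
  Ideal.Quotient.lift (boolRel g) (eval₂Hom (RingHom.id _) (fun x => q0 x + symF u x)) (by
    have hle : boolRel g ≤
        RingHom.ker (eval₂Hom (RingHom.id (ZMod 2)) (fun x : VV g => q0 x + symF u x)) := by
      rw [boolRel, Ideal.span_le]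
      rintro q (⟨x, y, rfl⟩ | ⟨x, rfl⟩)
      · simp only [SetLike.mem_coe, RingHom.mem_ker, map_sub, coe_eval₂Hom, eval₂_X, eval₂_C,
          q0_add, symF_add_right, RingHom.id_apply]
        ring
      · simp only [SetLike.mem_coe, RingHom.mem_ker, map_sub, map_pow, coe_eval₂Hom, eval₂_X]
        rcases z2_cases (q0 x + symF u x) with h | h <;> rw [h] <;> decide
    intro a ha
    exact hle ha)

lemma ev_bgen (u x : VV g) : ev u (bgen x) = q0 x + symF u x := by
  rw [ev, bgen]
  erw [Ideal.Quotient.lift_mk]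
  simp

/-- third difference -/
noncomputable def D3 (u v w : VV g) (b : BoolPoly g) : ZMod 2 :=
  ev 0 b + ev u b + ev v b + ev w b + ev (u + v) b + ev (u + w) b + ev (v + w) b
    + ev (u + v + w) b

lemma symF_zero_left (x : VV g) : symF 0 x = 0 := by simp [symF]

lemma D3_triple (u v w x y z : VV g) : D3 u v w (bgen x * bgen y * bgen z) =
    (symF u x * symF v y + symF v x * symF u y) * symF w z +
    (symF u y * symF v z + symF v y * symF u z) * symF w x +
    (symF u x * symF v z + symF v x * symF u z) * symF w y := by
  simp only [D3, map_mul, ev_bgen, symF_add_left, symF_zero_left, add_zero]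
  generalize q0 x = a, q0 y = b, q0 z = c
  generalize symF u x = ux, symF u y = uy, symF u z = uz
  generalize symF v x = vx, symF v y = vy, symF v z = vz
  generalize symF w x = wx, symF w y = wy, symF w z = wz
  have h2 : (2 : ZMod 2) = 0 := by decide
  rw [← sub_eq_zero]
  ring_nf
  reduce_mod_char

/-- the invariant functional -/
noncomputable def psi (p : Fin g) (b : BoolPoly g) : ZMod 2 :=
  ∑ i : Fin g, D3 (Pi.single (Sum.inl i) 1) (Pi.single (Sum.inr i) 1)
    (Pi.single (Sum.inr p) 1) b

lemma D3_add (u v w : VV g) (b c : BoolPoly g) : D3 u v w (b + c) = D3 u v w b + D3 u v w c := by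
  simp only [D3, map_add]; ring

lemma psi_add (p : Fin g) (b c : BoolPoly g) : psi p (b + c) = psi p b + psi p c := by
  simp only [psi, D3_add, Finset.sum_add_distrib]

lemma psi_zero (p : Fin g) : psi p (0 : BoolPoly g) = 0 := by simp [psi, D3]

lemma psi_one (p : Fin g) : psi p (1 : BoolPoly g) = 0 := by
  simp only [psi, D3, map_one]
  exact Finset.sum_eq_zero fun i _ => by decide

lemma psi_triple (p : Fin g) (x y z : VV g) : psi p (bgen x * bgen y * bgen z) =
    symF x y * symF (Pi.single (Sum.inr p) 1) z +
    symF y z * symF (Pi.single (Sum.inr p) 1) x +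
    symF x z * symF (Pi.single (Sum.inr p) 1) y := by
  simp only [psi, D3_triple, Finset.sum_add_distrib, ← Finset.sum_mul]
  have h : ∀ x y : VV g, ∑ i : Fin g, symF (Pi.single (Sum.inl i) 1) x *
        symF (Pi.single (Sum.inr i) 1) y
      + ∑ i : Fin g, symF (Pi.single (Sum.inr i) 1) x * symF (Pi.single (Sum.inl i) 1) y
      = symF x y := by
    intro x y
    rw [← Finset.sum_add_distrib, symF]
    refine Finset.sum_congr rfl fun i _ => ?_
    simp only [symF_single, Sum.swap_inl, Sum.swap_inr]
    ring
  rw [h, h, h]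

lemma psi_act (hg1 : 1 ≤ g) (p : Fin g) (hp : p.val = g - 1) (f : VV g ≃ₗ[ZMod 2] VV g)
    (hf : ∀ x y : VV g, symF (f x) (f y) = symF x y)
    (hB : f (Pi.single (Sum.inr p) 1) =
        Pi.single (Sum.inr p) 1) (m : BoolPoly g)
    (hm : m ∈ BoolDeg g 3) : psi p (actB f hf m - m) = 0 := by
  have h3 : ∀ x y z : VV g,
      psi p (actB f hf (bgen x * bgen y * bgen z) - bgen x * bgen y * bgen z) = 0 := by
    intro x y z
    have hB' : ∀ x, symF (Pi.single (Sum.inr p) 1) (f x) =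
        symF (Pi.single (Sum.inr p) 1) x := fun x => by
      conv_lhs => rw [← hB]
      exact hf _ _
    rw [ZModModule.sub_eq_add, psi_add, map_mul, map_mul, actB_bgen, actB_bgen, actB_bgen,
      psi_triple, psi_triple, hf, hf, hf, hB', hB', hB']
    exact CharTwo.add_self_eq_zero _
  induction hm using Submodule.span_induction with
  | mem b hb =>
    obtain ⟨l, hl, rfl⟩ := hb
    match l, hl with
    | [], _ => simp [psi_zero]
    | [x], _ => simpa [bgen_mul_self] using h3 x x x
    | [x, y], _ => simpa [bgen_mul_self] using h3 x x y
    | [x, y, z], _ => simpa [mul_assoc] using h3 x y z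
    | _ :: _ :: _ :: _ :: _, hl => simp at hl; omega
  | zero => simp [psi_zero]
  | add b c _ _ h1 h2 => rw [map_add, add_sub_add_comm, psi_add, h1, h2, add_zero]
  | smul c b _ h =>
    rcases z2_cases c with rfl | rfl
    · simp [psi_zero]
    · simpa using h

lemma psi_coinv (hg1 : 1 ≤ g) (p : Fin g) (hp : p.val = g - 1) (b : BoolPoly g) (hb : b ∈ coinvRel g hg1) : psi p b = 0 := by
  induction hb using Submodule.span_induction with
  | mem b hb =>
    obtain ⟨n, hn⟩ := p
    obtain rfl : n = g - 1 := hp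
    obtain ⟨f, hf, hB, m, hm, rfl⟩ := hb
    exact psi_act hg1 _ rfl f hf hB m hm
  | zero => exact psi_zero p
  | add b c _ _ h1 h2 => rw [psi_add, h1, h2, add_zero]
  | smul c b _ h =>
    rcases z2_cases c with rfl | rfl
    · rw [zero_smul, psi_zero]
    · rwa [one_smul]

end helpers

/-- for `g ≥ 4`, the coinvariant module `(B³)_Γ̄` of the degree ≤ 3
boolean polynomials under the stabilizer `Γ̄` of `B_g` in `Sp(2g,ℤ/2ℤ)` is a
one-dimensional `ℤ/2ℤ`-vector space generated by the image of `Ā₁B̄₁Ā_g`: every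
`m ∈ B³` is congruent to a multiple of `Ā₁B̄₁Ā_g` modulo the relation subspace, and
`Ā₁B̄₁Ā_g` itself is not in the relation subspace. -/
theorem stmt15 (g : ℕ) (hg1 : 1 ≤ g) (hg : 4 ≤ g) :
    (∀ m ∈ BoolDeg g 3, ∃ c : ZMod 2,
      m - c • (bgen (Pi.single (Sum.inl (⟨0, by omega⟩ : Fin g)) 1) *
        bgen (Pi.single (Sum.inr (⟨0, by omega⟩ : Fin g)) 1) *
        bgen (Pi.single (Sum.inl (⟨g - 1, by omega⟩ : Fin g)) 1)) ∈ coinvRel g hg1) ∧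
    (bgen (Pi.single (Sum.inl (⟨0, by omega⟩ : Fin g)) 1) *
        bgen (Pi.single (Sum.inr (⟨0, by omega⟩ : Fin g)) 1) *
        bgen (Pi.single (Sum.inl (⟨g - 1, by omega⟩ : Fin g)) 1) ∉ coinvRel g hg1) := by
  constructor
  · intro m hm
    have h := upper hg1 ⟨g - 1, by omega⟩ ⟨0, by omega⟩ rfl
      (by rw [Ne, Fin.mk.injEq]; omega) hg (coinvRel g hg1 ⊔ Submodule.span (ZMod 2)
      {bgen (Pi.single (Sum.inl (⟨0, by omega⟩ : Fin g)) 1) *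
        bgen (Pi.single (Sum.inr (⟨0, by omega⟩ : Fin g)) 1) *
        bgen (Pi.single (Sum.inl (⟨g - 1, by omega⟩ : Fin g)) 1)}) le_sup_left
      (Submodule.mem_sup_right (Submodule.mem_span_singleton_self _)) hm
    obtain ⟨a, ha, b, hb, rfl⟩ := Submodule.mem_sup.mp h
    obtain ⟨c, rfl⟩ := Submodule.mem_span_singleton.mp hb
    exact ⟨c, by rwa [add_sub_cancel_right]⟩
  · intro h
    have h0 := psi_coinv hg1 ⟨g - 1, by omega⟩ rfl _ h
    rw [psi_triple] at h0
    simp only [symF_single_single] at h0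
    have : (0 : ℕ) ≠ g - 1 := by omega
    simp [this] at h0
end

section
/- Let g ≥ 4. Let α := Σ_{i=1}^g ĀᵢB̄ᵢ ∈ B² and let B³_{g,0} denote the cokernel of the ℤ/2ℤ-linear map B¹ → B³ given by multiplication by α. The Sp(2g,ℤ/2ℤ)-action descends to B³_{g,0}, and the coinvariant module (B³_{g,0})_{Γ̄} under the stabilizer Γ̄ of B_g is: a one-dimensional ℤ/2ℤ-vector space generated by the image of Ā₁B̄₁Ā_g if g is odd, and the zero module if g is even. (Via the Birman–Craggs–Johnson homomorphism this computes H₁(I_g;ℤ)_{M_g(p₂)}.) -/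
open MvPolynomial

/-- The element `α = Σ_{i=1}^g Āᵢ B̄ᵢ ∈ B²`. -/
noncomputable def alphaElt (g : ℕ) : BoolPoly g :=
  ∑ i : Fin g, bgen (Pi.single (Sum.inl i) 1) * bgen (Pi.single (Sum.inr i) 1)

/-- The image of the multiplication map `α · : B¹ → B³`; `B³_{g,0}` is its cokernel
`B³ / α·B¹`. -/
noncomputable def imgAlpha (g : ℕ) : Submodule (ZMod 2) (BoolPoly g) :=
  Submodule.span (ZMod 2) {b | ∃ x ∈ BoolDeg g 1, b = alphaElt g * x}

namespace S16

variable {g : ℕ}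

/-- basis vectors -/
abbrev bv (e : Fin g ⊕ Fin g) : VV g := Pi.single e 1

lemma symF_add_left (x y z : VV g) : symF (x + y) z = symF x z + symF y z := by
  simp only [symF, ← Finset.sum_add_distrib, Pi.add_apply]
  exact Finset.sum_congr rfl fun i _ => by ring

lemma symF_comm (x y : VV g) : symF x y = symF y x := by
  simp only [symF]
  exact Finset.sum_congr rfl fun i _ => by ring

lemma symF_add_right (x y z : VV g) : symF x (y + z) = symF x y + symF x z := by
  rw [symF_comm, symF_add_left, symF_comm y, symF_comm z]

lemma symF_smul_left (c : ZMod 2) (x z : VV g) : symF (c • x) z = c * symF x z := by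
  simp only [symF, Finset.mul_sum, Pi.smul_apply, smul_eq_mul]
  exact Finset.sum_congr rfl fun i _ => by ring

lemma symF_smul_right (c : ZMod 2) (x z : VV g) : symF x (c • z) = c * symF x z := by
  rw [symF_comm, symF_smul_left, symF_comm]

lemma two_zmod : (2 : ZMod 2) = 0 := by decide

lemma symF_self (x : VV g) : symF x x = 0 := by
  simp only [symF]
  refine Finset.sum_eq_zero fun i _ => ?_
  linear_combination (x (Sum.inl i) * x (Sum.inr i)) * two_zmod

lemma symF_bv (x : VV g) (e : Fin g ⊕ Fin g) : symF x (bv e) = x e.swap := by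
  rcases e with i | i <;> simp [symF, bv, Pi.single_apply]

lemma symF_zero_left (x : VV g) : symF 0 x = 0 := by simp [symF]

lemma bgen_add (x y : VV g) :
    bgen (x + y) = bgen x + bgen y + algebraMap (ZMod 2) (BoolPoly g) (symF x y) := by
  have h : (X (x + y) - X x - X y - C (symF x y) : MvPolynomial (VV g) (ZMod 2)) ∈ boolRel g :=
    Ideal.subset_span (Or.inl ⟨x, y, rfl⟩)
  have h2 := Ideal.Quotient.eq_zero_iff_mem.mpr h
  simp only [map_sub] at h2
  have h3 : Ideal.Quotient.mk (boolRel g) (C (symF x y)) =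
    algebraMap (ZMod 2) (BoolPoly g) (symF x y) := rfl
  rw [h3] at h2
  simp only [bgen]
  linear_combination h2

lemma bgen_sq (x : VV g) : bgen x * bgen x = bgen x := by
  have h : (X x ^ 2 - X x : MvPolynomial (VV g) (ZMod 2)) ∈ boolRel g :=
    Ideal.subset_span (Or.inr ⟨x, rfl⟩)
  have h2 := Ideal.Quotient.eq_zero_iff_mem.mpr h
  simp only [map_sub, map_pow] at h2
  simp only [bgen]
  linear_combination h2

lemma two_B : (2 : BoolPoly g) = 0 := by
  have := congrArg (algebraMap (ZMod 2) (BoolPoly g)) two_zmod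
  rw [map_ofNat, map_zero] at this
  exact this

lemma bgen_zero : bgen (0 : VV g) = 0 := by
  have := bgen_add (0 : VV g) 0
  rw [symF_self, map_zero, add_zero, add_zero] at this
  linear_combination -this

lemma bgen_add0 (x y : VV g) (h : symF x y = 0) : bgen (x + y) = bgen x + bgen y := by
  rw [bgen_add, h, map_zero, add_zero]

lemma bgen_add1 (x y : VV g) (h : symF x y = 1) : bgen (x + y) = bgen x + bgen y + 1 := by
  rw [bgen_add, h, map_one]

lemma actB_bgen (f : VV g ≃ₗ[ZMod 2] VV g)
    (hf : ∀ x y : VV g, symF (f x) (f y) = symF x y) (x : VV g) :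
    actB f hf (bgen x) = bgen (f x) := by
  simp [actB, bgen]

lemma actB_smul (f : VV g ≃ₗ[ZMod 2] VV g)
    (hf : ∀ x y : VV g, symF (f x) (f y) = symF x y) (c : ZMod 2) (x : BoolPoly g) :
    actB f hf (c • x) = c • actB f hf x := by
  have : c = 0 ∨ c = 1 := by revert c; decide
  rcases this with rfl | rfl <;> simp

/-- induction on generators of the algebra -/
lemma B_induction {p : BoolPoly g → Prop} (h0 : p 0) (h1 : p 1) (hx : ∀ x, p (bgen x))
    (ha : ∀ a b, p a → p b → p (a + b)) (hm : ∀ a b, p a → p b → p (a * b)) (b : BoolPoly g) :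
    p b := by
  obtain ⟨q, rfl⟩ := Ideal.Quotient.mk_surjective b
  induction q using MvPolynomial.induction_on with
  | C c =>
    have : c = 0 ∨ c = 1 := by revert c; decide
    rcases this with rfl | rfl
    · simpa using h0
    · simpa using h1
  | add a b h h' => rw [map_add]; exact ha _ _ h h'
  | mul_X a x h => rw [map_mul]; exact hm _ _ h (hx x)

lemma B_sq (b : BoolPoly g) : b * b = b := by
  refine B_induction (p := fun b => b * b = b) ?_ ?_ bgen_sq ?_ ?_ b
  · simp
  · simp
  · intro a b h h'
    linear_combination h + h' + a * b * two_B
  · intro a b h h'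
    linear_combination b * b * h + a * h'

/-! ### Arf invariance -/

/-- sign of a field element -/
noncomputable def sgn {K : Type*} [Field K] (x : K) : ℤ := by
  classical exact if x = 0 then 1 else -1

section arf
variable {K : Type*} [Field K]

lemma K01 (hK : ∀ x : K, x * x = x) (x : K) : x = 0 ∨ x = 1 := by
  have h := hK x
  have : x * (x - 1) = 0 := by linear_combination h
  rcases mul_eq_zero.mp this with h | h
  · exact Or.inl h
  · exact Or.inr (by linear_combination h)

lemma K2 (hK : ∀ x : K, x * x = x) : (1 : K) + 1 = 0 := by
  have := hK (1 + 1)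
  linear_combination this - (1 + 1 : K) + 2

lemma sgn_zero : sgn (0 : K) = 1 := by simp [sgn]
lemma sgn_one : sgn (1 : K) = -1 := by simp [sgn]

lemma sgn_add (hK : ∀ x : K, x * x = x) (x y : K) : sgn (x + y) = sgn x * sgn y := by
  rcases K01 hK x with rfl | rfl <;> rcases K01 hK y with rfl | rfl <;>
    simp [sgn_zero, sgn_one, K2 hK]

lemma sgn_sum (hK : ∀ x : K, x * x = x) {ι : Type*} (s : Finset ι) (f : ι → K) :
    sgn (∑ i ∈ s, f i) = ∏ i ∈ s, sgn (f i) := by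
  classical
  induction s using Finset.induction_on with
  | empty => simp [sgn_zero]
  | insert a s ha ih => rw [Finset.sum_insert ha, Finset.prod_insert ha, sgn_add hK, ih]

lemma sgn_inj (hK : ∀ x : K, x * x = x) {x y : K} (h : sgn x = sgn y) : x = y := by
  rcases K01 hK x with rfl | rfl <;> rcases K01 hK y with rfl | rfl <;>
    simp [sgn_zero, sgn_one] at h ⊢ <;> omega

/-- the vector with two coordinates -/
def pairV (i : Fin g) (c : ZMod 2 × ZMod 2) : VV g :=
  c.1 • bv (Sum.inl i) + c.2 • bv (Sum.inr i)

lemma symF_bv_bv (e e' : Fin g ⊕ Fin g) : symF (bv e) (bv e') = if e'.swap = e then 1 else 0 := by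
  rw [symF_bv, bv, Pi.single_apply]

lemma symF_pairV (i j : Fin g) (h : i ≠ j) (c d : ZMod 2 × ZMod 2) :
    symF (pairV i c) (pairV j d) = 0 := by
  simp only [pairV, symF_add_left, symF_add_right, symF_smul_left, symF_smul_right, symF_bv_bv]
  simp [h.symm]

lemma symF_sum_right {ι : Type*} (s : Finset ι) (x : VV g) (f : ι → VV g) :
    symF x (∑ i ∈ s, f i) = ∑ i ∈ s, symF x (f i) := by
  classical
  induction s using Finset.induction_on with
  | empty => simp [symF]
  | insert a s ha ih => rw [Finset.sum_insert ha, Finset.sum_insert ha, symF_add_right, ih]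

lemma bgen_sum_pair (c : Fin g → ZMod 2 × ZMod 2) (s : Finset (Fin g)) :
    bgen (∑ i ∈ s, pairV i (c i)) = ∑ i ∈ s, bgen (pairV i (c i)) := by
  classical
  induction s using Finset.induction_on with
  | empty => simp [bgen_zero]
  | insert a s ha ih =>
    rw [Finset.sum_insert ha, Finset.sum_insert ha, bgen_add0, ih]
    rw [symF_sum_right]
    refine Finset.sum_eq_zero fun i hi => symF_pairV _ _ ?_ _ _
    rintro rfl; exact ha hi

/-- coordinates by pairs -/
def pairEquiv (g : ℕ) : (Fin g → ZMod 2 × ZMod 2) ≃ VV g where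
  toFun c := Sum.elim (fun i => (c i).1) (fun i => (c i).2)
  invFun x i := (x (Sum.inl i), x (Sum.inr i))
  left_inv c := rfl
  right_inv x := by ext (i | i) <;> rfl

lemma pairEquiv_eq (c : Fin g → ZMod 2 × ZMod 2) : pairEquiv g c = ∑ i, pairV i (c i) := by
  ext (i | i) <;> simp [pairEquiv, pairV, Finset.sum_apply, Pi.single_apply] <;> rfl

lemma bgen_pairV (i : Fin g) (c : ZMod 2 × ZMod 2) : bgen (pairV i c) =
    c.1 • bgen (bv (Sum.inl i)) + c.2 • bgen (bv (Sum.inr i)) +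
      algebraMap (ZMod 2) (BoolPoly g) (c.1 * c.2) := by
  have hs (c : ZMod 2) (x : VV g) : bgen (c • x) = c • bgen x := by
    have : c = 0 ∨ c = 1 := by revert c; decide
    rcases this with rfl | rfl <;> simp [bgen_zero]
  rw [pairV, bgen_add, hs, hs, symF_smul_left, symF_smul_right, symF_bv_bv]
  simp

lemma arf_sum (hK : ∀ x : K, x * x = x) (w : BoolPoly g →+* K) :
    ∑ x : VV g, sgn (w (bgen x)) = 2 ^ g * sgn (w (alphaElt g)) := by
  rw [← (pairEquiv g).sum_comp]
  have h1 (c : Fin g → ZMod 2 × ZMod 2) :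
      sgn (w (bgen (pairEquiv g c))) = ∏ i, sgn (w (bgen (pairV i (c i)))) := by
    rw [pairEquiv_eq, bgen_sum_pair, map_sum, sgn_sum hK]
  simp only [h1]
  have h2 := Finset.prod_univ_sum (fun _ : Fin g => (Finset.univ : Finset (ZMod 2 × ZMod 2)))
    (fun i c => sgn (w (bgen (pairV i c))))
  rw [Fintype.piFinset_univ] at h2
  rw [← h2, alphaElt, map_sum, sgn_sum hK]
  have : (2 : ℤ) ^ g = ∏ i : Fin g, 2 := by simp
  rw [this, ← Finset.prod_mul_distrib]
  refine Finset.prod_congr rfl fun i _ => ?_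
  rw [Fintype.sum_prod_type]
  have e : (Finset.univ : Finset (ZMod 2)) = {0, 1} := by decide
  have hne : (0 : ZMod 2) ∉ ({1} : Finset (ZMod 2)) := by decide
  simp only [e, Finset.sum_insert hne, Finset.sum_singleton, bgen_pairV, map_mul, map_add]
  simp only [zero_smul, one_smul, map_zero, map_one, mul_zero, mul_one, add_zero, zero_add]
  rcases K01 hK (w (bgen (bv (Sum.inl i)))) with h | h <;>
  rcases K01 hK (w (bgen (bv (Sum.inr i)))) with h' | h' <;>
  · simp only [bv] at h h' ⊢
    rw [h, h']; simp [sgn_zero, sgn_one, K2 hK]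

end arf

lemma actB_alpha (f : VV g ≃ₗ[ZMod 2] VV g)
    (hf : ∀ x y : VV g, symF (f x) (f y) = symF x y) : actB f hf (alphaElt g) = alphaElt g := by
  by_contra hne
  set b := actB f hf (alphaElt g) - alphaElt g with hb
  have hb0 : b ≠ 0 := sub_ne_zero.mpr hne
  have hnu : ¬ IsUnit (1 - b) := by
    intro hu
    apply hb0
    have : (1 - b) * b = 0 := by linear_combination -(B_sq b)
    exact (hu.mul_right_eq_zero).mp this
  obtain ⟨M, hM, hbM⟩ := exists_max_ideal_of_mem_nonunits hnu
  letI : Field (BoolPoly g ⧸ M) := Ideal.Quotient.field M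
  have hK : ∀ x : BoolPoly g ⧸ M, x * x = x := by
    intro x
    obtain ⟨x, rfl⟩ := Ideal.Quotient.mk_surjective x
    rw [← map_mul, B_sq]
  let w : BoolPoly g →+* BoolPoly g ⧸ M := Ideal.Quotient.mk M
  have h1 := arf_sum hK w
  have h2 := arf_sum hK (w.comp (actB f hf))
  have h3 : ∑ x : VV g, sgn ((w.comp (actB f hf)) (bgen x)) = ∑ x : VV g, sgn (w (bgen x)) := by
    simp only [RingHom.comp_apply, actB_bgen]
    exact f.toEquiv.sum_comp (fun x => sgn (w (bgen x)))
  rw [h3, h1] at h2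
  have h4 := sgn_inj hK (mul_left_cancel₀ (by positivity) h2)
  have h5 : w b = 0 := by rw [hb, map_sub, h4]; simp
  have h6 : w (1 - b) = 0 := Ideal.Quotient.eq_zero_iff_mem.mpr hbM
  rw [map_sub, h5, map_one, sub_zero] at h6
  exact one_ne_zero h6

/-! ### degrees -/

lemma actB_deg (f : VV g ≃ₗ[ZMod 2] VV g)
    (hf : ∀ x y : VV g, symF (f x) (f y) = symF x y) (n : ℕ) (b : BoolPoly g)
    (hb : b ∈ BoolDeg g n) : actB f hf b ∈ BoolDeg g n := by
  rw [BoolDeg] at hb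
  induction hb using Submodule.span_induction with
  | mem x hx =>
    obtain ⟨l, hl, rfl⟩ := hx
    refine Submodule.subset_span ⟨l.map f, by simpa using hl, ?_⟩
    rw [map_list_prod, List.map_map, List.map_map]
    congr 2
    funext x
    exact actB_bgen f hf x
  | zero => rw [map_zero]; exact Submodule.zero_mem _
  | add x y _ _ h h' => rw [map_add]; exact Submodule.add_mem _ h h'
  | smul c x _ h => rw [actB_smul]; exact Submodule.smul_mem _ _ h

lemma part1 (f : VV g ≃ₗ[ZMod 2] VV g) (hf : ∀ x y : VV g, symF (f x) (f y) = symF x y)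
    (b : BoolPoly g) (hb : b ∈ imgAlpha g) : actB f hf b ∈ imgAlpha g := by
  rw [imgAlpha] at hb
  induction hb using Submodule.span_induction with
  | mem x hx =>
    obtain ⟨y, hy, rfl⟩ := hx
    exact Submodule.subset_span ⟨actB f hf y, actB_deg f hf 1 y hy, by rw [map_mul, actB_alpha]⟩
  | zero => rw [map_zero]; exact Submodule.zero_mem _
  | add x y _ _ h h' => rw [map_add]; exact Submodule.add_mem _ h h'
  | smul c x _ h => rw [actB_smul]; exact Submodule.smul_mem _ _ h

lemma deg_one (n : ℕ) : (1 : BoolPoly g) ∈ BoolDeg g n :=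
  Submodule.subset_span ⟨[], by simp, by simp⟩

lemma deg1 (x : VV g) : bgen x ∈ BoolDeg g 1 :=
  Submodule.subset_span ⟨[x], by simp, by simp⟩

lemma deg3 (x y z : VV g) : bgen x * bgen y * bgen z ∈ BoolDeg g 3 :=
  Submodule.subset_span ⟨[x, y, z], by simp, by simp [mul_assoc]⟩

/-! ### transvections -/

/-- transvection -/
def trv (v : VV g) : VV g ≃ₗ[ZMod 2] VV g :=
  LinearEquiv.ofInvolutive
    { toFun := fun x => x + symF x v • v
      map_add' := fun x y => by rw [symF_add_left, add_smul]; abel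
      map_smul' := fun c x => by
        rw [symF_smul_left, smul_add, mul_smul]; rfl }
    (by
      intro x
      change (x + symF x v • v) + symF (x + symF x v • v) v • v = x
      rw [symF_add_left, symF_smul_left, symF_self, mul_zero, add_zero, add_assoc, ← add_smul]
      have : symF x v + symF x v = 0 := by linear_combination symF x v * two_zmod
      rw [this, zero_smul, add_zero])

lemma trv_apply (v x : VV g) : trv v x = x + symF x v • v := rfl

lemma trv_symF (v x y : VV g) : symF (trv v x) (trv v y) = symF x y := by
  simp only [trv_apply, symF_add_left, symF_add_right, symF_smul_left, symF_smul_right,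
    symF_self, symF_comm v y]
  linear_combination symF x v * symF y v * two_zmod

lemma act0 (v x : VV g) (h : symF x v = 0) : actB (trv v) (trv_symF v) (bgen x) = bgen x := by
  rw [actB_bgen, trv_apply, h, zero_smul, add_zero]

lemma act1 (v x : VV g) (h : symF x v = 1) :
    actB (trv v) (trv_symF v) (bgen x) = bgen x + bgen v + 1 := by
  rw [actB_bgen, trv_apply, h, one_smul, bgen_add1 _ _ h]

/-- the last index -/
abbrev lst (hg1 : 1 ≤ g) : Fin g := ⟨g - 1, by omega⟩

section upper
variable (hg1 : 1 ≤ g)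

/-- the relation module -/
noncomputable abbrev NN : Submodule (ZMod 2) (BoolPoly g) := coinvRel g hg1 ⊔ imgAlpha g

lemma rel_trv (v : VV g) (hv : v (Sum.inl (lst hg1)) = 0) (m : BoolPoly g)
    (hm : m ∈ BoolDeg g 3) : actB (trv v) (trv_symF v) m - m ∈ NN hg1 := by
  refine Submodule.mem_sup_left (Submodule.subset_span ⟨trv v, trv_symF v, ?_, m, hm, rfl⟩)
  rw [trv_apply, symF_comm]
  have := symF_bv v (Sum.inr (lst hg1))
  rw [Sum.swap_inr, hv] at this
  simp only [bv] at this
  rw [this, zero_smul, add_zero]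

/-- If `v ⟂ b, y, z` and `v ≠ 0` then `v y z ≡ y z`. -/
lemma R1 (v y z x : VV g) (hv : v (Sum.inl (lst hg1)) = 0) (hx : symF x v = 1)
    (hy : symF y v = 0) (hz : symF z v = 0) :
    bgen v * (bgen y * bgen z) + bgen y * bgen z ∈ NN hg1 := by
  have h := rel_trv hg1 v hv _ (deg3 x y z)
  rw [map_mul, map_mul, act1 _ _ hx, act0 _ _ hy, act0 _ _ hz] at h
  convert h using 1
  ring

lemma exists_two (hg : 4 ≤ g) (i j : Fin g) : ∃ k l : Fin g, k ≠ l ∧ k ≠ i ∧ k ≠ j ∧ l ≠ i ∧ l ≠ j := by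
  have hc : 1 < (({i, j} : Finset (Fin g))ᶜ).card := by
    rw [Finset.card_compl, Fintype.card_fin]
    have := Finset.card_le_two (a := i) (b := j)
    omega
  obtain ⟨k, hk, l, hl, hkl⟩ := Finset.one_lt_card.mp hc
  simp at hk hl
  exact ⟨k, l, hkl, hk.1, hk.2, hl.1, hl.2⟩

/-- index of a basis element -/
def idx : Fin g ⊕ Fin g → Fin g := Sum.elim id id

lemma symF_inr (e : Fin g ⊕ Fin g) (k : Fin g) (h : k ≠ idx e) :
    symF (bv e) (bv (Sum.inr k)) = 0 := by
  rw [symF_bv_bv, if_neg]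
  rintro rfl
  exact h rfl

lemma deg2_basis (hg : 4 ≤ g) (e e' : Fin g ⊕ Fin g) :
    bgen (bv e) * bgen (bv e') ∈ NN hg1 := by
  obtain ⟨k, l, hkl, h1, h2, h3, h4⟩ := exists_two hg (idx e) (idx e')
  have r1 := R1 hg1 (bv (Sum.inr k)) (bv e) (bv e') (bv (Sum.inl k)) (by simp)
    (by simp [symF_bv_bv]) (symF_inr _ _ h1) (symF_inr _ _ h2)
  have r2 := R1 hg1 (bv (Sum.inr l)) (bv e) (bv e') (bv (Sum.inl l)) (by simp)
    (by simp [symF_bv_bv]) (symF_inr _ _ h3) (symF_inr _ _ h4)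
  have r3 := R1 hg1 (bv (Sum.inr k) + bv (Sum.inr l)) (bv e) (bv e') (bv (Sum.inl k)) (by simp)
    (by rw [symF_add_right]; simp [symF_bv_bv, hkl.symm])
    (by rw [symF_add_right, symF_inr _ _ h1, symF_inr _ _ h3, add_zero])
    (by rw [symF_add_right, symF_inr _ _ h2, symF_inr _ _ h4, add_zero])
  rw [bgen_add0 _ _ (by simp [symF_bv_bv])] at r3
  convert Submodule.sub_mem _ (Submodule.add_mem _ r1 r2) r3 using 1
  ring

lemma deg1_basis (hg : 4 ≤ g) (e : Fin g ⊕ Fin g) : bgen (bv e) ∈ NN hg1 := by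
  rw [← bgen_sq]; exact deg2_basis hg1 hg e e

lemma one_mem (hg : 4 ≤ g) : (1 : BoolPoly g) ∈ NN hg1 := by
  let i : Fin g := ⟨0, by omega⟩
  have r1 := rel_trv hg1 (bv (Sum.inr i)) (by simp) (bgen (bv (Sum.inl i)))
    (by
      have := deg3 (bv (Sum.inl i)) (bv (Sum.inl i)) (bv (Sum.inl i))
      rwa [bgen_sq, bgen_sq] at this)
  rw [act1 _ _ (by simp [symF_bv_bv])] at r1
  convert Submodule.sub_mem _ r1 (deg1_basis hg1 hg (Sum.inr i)) using 1
  ring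

/-- span of `1` and the basis generators -/
noncomputable def SS (g : ℕ) : Submodule (ZMod 2) (BoolPoly g) :=
  Submodule.span (ZMod 2) (insert 1 (Set.range fun e => bgen (bv e)))

lemma one_SS : (1 : BoolPoly g) ∈ SS g := Submodule.subset_span (Set.mem_insert _ _)

lemma bgen_SS (x : VV g) : bgen x ∈ SS g := by
  have hx : x = ∑ e, Pi.single e (x e) := (Finset.univ_sum_single x).symm
  rw [hx]
  refine Finset.sum_induction _ (fun y => bgen y ∈ SS g) ?_ ?_ ?_
  · intro a b ha hb
    rw [bgen_add, Algebra.algebraMap_eq_smul_one]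
    exact add_mem (add_mem ha hb) (Submodule.smul_mem _ _ one_SS)
  · rw [bgen_zero]; exact zero_mem _
  · intro e _
    have : ∀ c : ZMod 2, c = 0 ∨ c = 1 := by decide
    rcases this (x e) with h | h <;> rw [h]
    · rw [Pi.single_zero, bgen_zero]; exact zero_mem _
    · exact Submodule.subset_span (Set.mem_insert_of_mem _ ⟨e, rfl⟩)

lemma deg3_le : BoolDeg g 3 ≤ SS g * SS g * SS g := by
  rw [BoolDeg, Submodule.span_le]
  rintro _ ⟨l, hl, rfl⟩
  have key (p q r : BoolPoly g) (hp : p ∈ SS g) (hq : q ∈ SS g) (hr : r ∈ SS g) :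
    p * q * r ∈ SS g * SS g * SS g := Submodule.mul_mem_mul (Submodule.mul_mem_mul hp hq) hr
  match l, hl with
  | [], _ => simpa using key 1 1 1 one_SS one_SS one_SS
  | [x], _ => simpa using key (bgen x) 1 1 (bgen_SS x) one_SS one_SS
  | [x, y], _ => simpa using key (bgen x) (bgen y) 1 (bgen_SS x) (bgen_SS y) one_SS
  | [x, y, z], _ =>
    simpa [mul_assoc] using key (bgen x) (bgen y) (bgen z) (bgen_SS x) (bgen_SS y) (bgen_SS z)
  | _ :: _ :: _ :: _ :: _, h => simp only [List.length_cons] at h; omega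

lemma upper_of_basis (hg : 4 ≤ g) (N' : Submodule (ZMod 2) (BoolPoly g)) (hN : NN hg1 ≤ N')
    (h : ∀ e e' e'', bgen (bv e) * bgen (bv e') * bgen (bv e'') ∈ N') : BoolDeg g 3 ≤ N' := by
  refine deg3_le.trans ?_
  rw [SS, Submodule.span_mul_span, Submodule.span_mul_span, Submodule.span_le]
  rintro _ ⟨_, ⟨p, hp, q, hq, rfl⟩, r, hr, rfl⟩
  have h2 := fun e e' => hN (deg2_basis hg1 hg e e')
  have h1 := fun e => hN (deg1_basis hg1 hg e)
  have h0 := hN (one_mem hg1 hg)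
  have hh : p * q * r ∈ N' := by
    rcases hp with rfl | ⟨e, rfl⟩
    · rw [one_mul]
      rcases hq with rfl | ⟨e', rfl⟩
      · rw [one_mul]
        rcases hr with rfl | ⟨e'', rfl⟩
        · exact h0
        · exact h1 _
      · rcases hr with rfl | ⟨e'', rfl⟩
        · rw [mul_one]; exact h1 _
        · exact h2 _ _
    · rcases hq with rfl | ⟨e', rfl⟩
      · rw [mul_one]
        rcases hr with rfl | ⟨e'', rfl⟩
        · rw [mul_one]; exact h1 _
        · exact h2 _ _
      · rcases hr with rfl | ⟨e'', rfl⟩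
        · rw [mul_one]; exact h2 _ _
        · exact h _ _ _
  exact hh

/-- isolated basis vector -/
lemma iso (hg : 4 ≤ g) (e e' e'' : Fin g ⊕ Fin g) (he : e ≠ Sum.inl (lst hg1))
    (h' : e' ≠ e.swap) (h'' : e'' ≠ e.swap) :
    bgen (bv e) * bgen (bv e') * bgen (bv e'') ∈ NN hg1 := by
  have r := R1 hg1 (bv e) (bv e') (bv e'') (bv e.swap)
    (by rw [bv, Pi.single_apply, if_neg (Ne.symm he)])
    (by rw [symF_bv_bv]; simp) (by rw [symF_bv_bv, if_neg h'.symm])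
    (by rw [symF_bv_bv, if_neg h''.symm])
  convert Submodule.sub_mem _ r (deg2_basis hg1 hg e' e'') using 1
  ring

/-- the elements `A_i B_i A_g` -/
noncomputable def tt (i : Fin g) : BoolPoly g :=
  bgen (bv (Sum.inl i)) * bgen (bv (Sum.inr i)) * bgen (bv (Sum.inl (lst hg1)))

lemma tt_lst (hg : 4 ≤ g) : tt hg1 (lst hg1) ∈ NN hg1 := by
  have := deg2_basis hg1 hg (Sum.inl (lst hg1)) (Sum.inr (lst hg1))
  rw [← bgen_sq] at this
  convert this using 1
  rw [tt]; ring

lemma tt_eq (hg : 4 ≤ g) (i j : Fin g) (hi : i ≠ lst hg1) (hj : j ≠ lst hg1) :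
    tt hg1 i - tt hg1 j ∈ NN hg1 := by
  by_cases hij : i = j
  · subst hij; simp
  set a := lst hg1
  have r := rel_trv hg1 (bv (Sum.inl i) + bv (Sum.inl j))
    (by simp [hi.symm, hj.symm, a] at *)
    _ (deg3 (bv (Sum.inr i)) (bv (Sum.inr j)) (bv (Sum.inl a)))
  rw [map_mul, map_mul, act1 _ _ (by rw [symF_add_right]; simp [symF_bv_bv, Ne.symm hij]),
    act1 _ _ (by rw [symF_add_right]; simp [symF_bv_bv, hij]),
    act0 _ _ (by rw [symF_add_right]; simp [symF_bv_bv]),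
    bgen_add0 _ _ (by simp [symF_bv_bv])] at r
  have s1 := iso hg1 hg (Sum.inl i) (Sum.inr j) (Sum.inl a) (by simpa using hi)
    (by simpa using Ne.symm hij) (by simp)
  have s2 := iso hg1 hg (Sum.inl j) (Sum.inr i) (Sum.inl a) (by simpa using hj)
    (by simpa using hij) (by simp)
  have d1 := deg2_basis hg1 hg (Sum.inr i) (Sum.inl a)
  have d2 := deg2_basis hg1 hg (Sum.inr j) (Sum.inl a)
  have d3 := deg2_basis hg1 hg (Sum.inl i) (Sum.inl a)
  have d4 := deg2_basis hg1 hg (Sum.inl j) (Sum.inl a)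
  have d5 := deg1_basis hg1 hg (Sum.inl a)
  have q1 := bgen_sq (bv (Sum.inl i))
  have q2 := bgen_sq (bv (Sum.inl j))
  have tw := two_B (g := g)
  have S := add_mem (add_mem (add_mem (add_mem r s1) (add_mem s2 d1)) (add_mem d2 d3)) (add_mem d4 d5)
  convert S using 1
  simp only [tt]
  generalize bgen (bv (Sum.inl i)) = A at *
  generalize bgen (bv (Sum.inl j)) = A' at *
  generalize bgen (bv (Sum.inr i)) = B at *
  generalize bgen (bv (Sum.inr j)) = B' at *
  generalize bgen (bv (Sum.inl (lst hg1))) = G at *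
  have q12 : (2 : BoolPoly g) = 0 := tw
  linear_combination (-G) * q1 - G * q2 + (-A'*B'*G - A*B'*G - A'*B*G - A*A'*G - 2*A*G - 2*A'*G - B*G - B'*G - G) * tw

lemma basis_mem (hg : 4 ≤ g) (i₀ : Fin g) (hi₀ : i₀ ≠ lst hg1) (e e' e'' : Fin g ⊕ Fin g) :
    bgen (bv e) * bgen (bv e') * bgen (bv e'') ∈
      NN hg1 ⊔ Submodule.span (ZMod 2) {tt hg1 i₀} := by
  set N' := NN hg1 ⊔ Submodule.span (ZMod 2) {tt hg1 i₀}
  have hN : NN hg1 ≤ N' := le_sup_left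
  have ht : tt hg1 i₀ ∈ N' := Submodule.mem_sup_right (Submodule.mem_span_singleton_self _)
  have htt : ∀ i, tt hg1 i ∈ N' := by
    intro i
    by_cases h : i = lst hg1
    · subst h; exact hN (tt_lst hg1 hg)
    · have := add_mem (hN (tt_eq hg1 hg i i₀ h hi₀)) ht
      simpa using this
  -- paired case
  have hp : ∀ e e'' : Fin g ⊕ Fin g, e'' ≠ e → e'' ≠ e.swap →
      bgen (bv e) * bgen (bv e.swap) * bgen (bv e'') ∈ N' := by
    intro e e'' h1 h2
    by_cases h3 : e'' = Sum.inl (lst hg1)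
    · subst h3
      rcases e with i | i
      · exact htt i
      · convert htt i using 1
        simp only [tt, Sum.swap_inr]; ring
    · have := hN (iso hg1 hg e'' e e.swap h3
        (by rintro rfl; simp at h2) (by intro h; exact h1 (by simpa using (congrArg Sum.swap h).symm)))
      convert this using 1
      ring
  by_cases h1 : e = e'
  · subst h1; rw [bgen_sq]; exact hN (deg2_basis hg1 hg _ _)
  by_cases h2 : e' = e''
  · subst h2; rw [mul_assoc, bgen_sq]; exact hN (deg2_basis hg1 hg _ _)
  by_cases h3 : e = e''
  · subst h3
    rw [mul_comm, ← mul_assoc, bgen_sq]; exact hN (deg2_basis hg1 hg _ _)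
  by_cases p1 : e' = e.swap
  · subst p1; exact hp _ _ (Ne.symm h3) (Ne.symm h2)
  by_cases p2 : e'' = e.swap
  · subst p2
    convert hp e e' (Ne.symm h1) h2 using 1
    ring
  by_cases p3 : e'' = e'.swap
  · subst p3
    convert hp e' e h1 h3 using 1
    ring
  by_cases hl : e = Sum.inl (lst hg1)
  · have h5 : e' ≠ Sum.inl (lst hg1) := fun h => h1 (hl.trans h.symm)
    have := hN (iso hg1 hg e' e e'' h5 (by rintro rfl; simp at p1) p3)
    convert this using 1
    ring
  · exact hN (iso hg1 hg e e' e'' hl p1 p2)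

lemma upper (hg : 4 ≤ g) (i₀ : Fin g) (hi₀ : i₀ ≠ lst hg1) :
    BoolDeg g 3 ≤ NN hg1 ⊔ Submodule.span (ZMod 2) {tt hg1 i₀} :=
  upper_of_basis hg1 hg _ le_sup_left (basis_mem hg1 hg i₀ hi₀)

lemma even_tt (hg : 4 ≤ g) (hev : Even g) (i₀ : Fin g) (hi₀ : i₀ ≠ lst hg1) :
    tt hg1 i₀ ∈ NN hg1 := by
  have h : alphaElt g * bgen (bv (Sum.inl (lst hg1))) ∈ NN hg1 :=
    Submodule.mem_sup_right (Submodule.subset_span ⟨_, deg1 _, rfl⟩)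
  have h2 : alphaElt g * bgen (bv (Sum.inl (lst hg1))) = ∑ i, tt hg1 i := by
    rw [alphaElt, Finset.sum_mul]; rfl
  rw [h2, ← Finset.add_sum_erase _ _ (Finset.mem_univ (lst hg1))] at h
  have h3 := sub_mem h (tt_lst hg1 hg)
  rw [add_sub_cancel_left] at h3
  have h4 : ∑ i ∈ Finset.univ.erase (lst hg1), (tt hg1 i - tt hg1 i₀) ∈ NN hg1 :=
    sum_mem fun i hi => tt_eq hg1 hg i i₀ (Finset.ne_of_mem_erase hi) hi₀
  rw [Finset.sum_sub_distrib, Finset.sum_const, Finset.card_erase_of_mem (Finset.mem_univ _),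
    Finset.card_univ, Fintype.card_fin] at h4
  have h5 := sub_mem h3 h4
  obtain ⟨k, hk⟩ := hev
  have h6 : g - 1 = 2 * (k - 1) + 1 := by omega
  rw [sub_sub_cancel, h6, nsmul_eq_mul] at h5
  convert h5 using 1
  push_cast
  rw [two_B]; ring

end upper

/-! ### the invariant functional -/

section lower

/-- standard quadratic form -/
def qf (x : VV g) : ZMod 2 := ∑ i : Fin g, x (Sum.inl i) * x (Sum.inr i)

/-- evaluation at the form `q + (· , w)` -/
noncomputable def ev (w : VV g) : BoolPoly g →+* ZMod 2 :=
  Ideal.Quotient.lift (boolRel g) (MvPolynomial.eval (fun x : VV g => qf x + symF x w)) (by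
    intro a ha
    have hle : boolRel g ≤ RingHom.ker (MvPolynomial.eval (fun x : VV g => qf x + symF x w)) := by
      rw [boolRel, Ideal.span_le]
      rintro q (⟨x, y, rfl⟩ | ⟨x, rfl⟩)
      · have : qf (x + y) = qf x + qf y + symF x y := by
          simp only [qf, symF, ← Finset.sum_add_distrib, Pi.add_apply]
          exact Finset.sum_congr rfl fun i _ => by ring
        simp only [SetLike.mem_coe, RingHom.mem_ker, map_sub, eval_X, eval_C, this, symF_add_left]
        ring
      · have : ∀ c : ZMod 2, c ^ 2 - c = 0 := by decide
        simp [RingHom.mem_ker, this]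
    exact (RingHom.mem_ker).mp (hle ha))

lemma ev_bgen (w x : VV g) : ev w (bgen x) = qf x + symF x w := by
  rw [ev, bgen, Ideal.Quotient.lift_mk, eval_X]

/-- third derivative -/
noncomputable def D3 (u v w : VV g) (b : BoolPoly g) : ZMod 2 :=
  ev 0 b + ev u b + ev v b + ev w b + ev (u + v) b + ev (u + w) b + ev (v + w) b + ev (u + v + w) b

variable (hg1 : 1 ≤ g)

/-- the functional -/
noncomputable def phi (b : BoolPoly g) : ZMod 2 :=
  ∑ i : Fin g, D3 (bv (Sum.inl i)) (bv (Sum.inr i)) (bv (Sum.inr (lst hg1))) b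

lemma phi_add (a b : BoolPoly g) : phi hg1 (a + b) = phi hg1 a + phi hg1 b := by
  simp only [phi, ← Finset.sum_add_distrib, D3, map_add]
  exact Finset.sum_congr rfl fun i _ => by ring

lemma phi_zero : phi hg1 (0 : BoolPoly g) = 0 := by simp [phi, D3]

lemma phi_smul (c : ZMod 2) (a : BoolPoly g) : phi hg1 (c • a) = c * phi hg1 a := by
  have : c = 0 ∨ c = 1 := by revert c; decide
  rcases this with rfl | rfl <;> simp [phi_zero]

/-- as a linear map -/
noncomputable def phiL : BoolPoly g →ₗ[ZMod 2] ZMod 2 where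
  toFun := phi hg1
  map_add' := phi_add hg1
  map_smul' := phi_smul hg1

lemma symF_zero_right (x : VV g) : symF x 0 = 0 := by simp [symF]

lemma D3_three (u v w x y z : VV g) : D3 u v w (bgen x * bgen y * bgen z) =
    (symF x u * symF y v + symF x v * symF y u) * symF z w +
    (symF y u * symF z v + symF y v * symF z u) * symF x w +
    (symF z u * symF x v + symF z v * symF x u) * symF y w := by
  simp only [D3, map_mul, ev_bgen, symF_add_right, symF_zero_right]
  generalize qf x = a
  generalize qf y = b
  generalize qf z = c
  generalize symF x u = x1
  generalize symF x v = x2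
  generalize symF x w = x3
  generalize symF y u = y1
  generalize symF y v = y2
  generalize symF y w = y3
  generalize symF z u = z1
  generalize symF z v = z2
  generalize symF z w = z3
  have h := two_zmod
  ring_nf
  simp only [show (8 : ZMod 2) = 0 by decide, show (4 : ZMod 2) = 0 by decide,
    show (2 : ZMod 2) = 0 by decide, mul_zero, add_zero, zero_add]
  try ring

lemma symF_expand (x y : VV g) : symF x y =
    ∑ i : Fin g, (symF x (bv (Sum.inl i)) * symF y (bv (Sum.inr i)) +
      symF x (bv (Sum.inr i)) * symF y (bv (Sum.inl i))) := by
  simp only [symF_bv, Sum.swap_inl, Sum.swap_inr]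
  rw [symF]
  exact Finset.sum_congr rfl fun i _ => by ring

lemma phi_three (x y z : VV g) : phi hg1 (bgen x * bgen y * bgen z) =
    symF x y * symF z (bv (Sum.inr (lst hg1))) + symF y z * symF x (bv (Sum.inr (lst hg1))) +
    symF z x * symF y (bv (Sum.inr (lst hg1))) := by
  simp only [phi, D3_three]
  rw [Finset.sum_add_distrib, Finset.sum_add_distrib, ← Finset.sum_mul, ← Finset.sum_mul,
    ← Finset.sum_mul, ← symF_expand, ← symF_expand, ← symF_expand]

lemma phi_two (x y : VV g) : phi hg1 (bgen x * bgen y) = 0 := by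
  have := phi_three hg1 x x y
  rw [bgen_sq] at this
  rw [this, symF_self, symF_comm y x]
  linear_combination symF x y * symF x (bv (Sum.inr (lst hg1))) * two_zmod

lemma phi_one (x : VV g) : phi hg1 (bgen x) = 0 := by
  rw [← bgen_sq]; exact phi_two hg1 x x

lemma phi_unit : phi hg1 (1 : BoolPoly g) = 0 := by
  simp only [phi, D3, map_one]
  exact Finset.sum_eq_zero fun i _ => by decide

lemma phi_act (f : VV g ≃ₗ[ZMod 2] VV g) (hf : ∀ x y : VV g, symF (f x) (f y) = symF x y)
    (hfb : f (bv (Sum.inr (lst hg1))) = bv (Sum.inr (lst hg1))) (m : BoolPoly g)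
    (hm : m ∈ BoolDeg g 3) : phi hg1 (actB f hf m) = phi hg1 m := by
  rw [BoolDeg] at hm
  have hb (x : VV g) : symF (f x) (bv (Sum.inr (lst hg1))) = symF x (bv (Sum.inr (lst hg1))) := by
    conv_lhs => rw [← hfb]
    exact hf _ _
  induction hm using Submodule.span_induction with
  | mem x hx =>
    obtain ⟨l, hl, rfl⟩ := hx
    match l, hl with
    | [], _ => simp
    | [x], _ => simp [actB_bgen, phi_one]
    | [x, y], _ => simp [actB_bgen, phi_two]
    | [x, y, z], _ =>
      simp only [List.map_cons, List.map_nil, List.prod_cons, List.prod_nil, mul_one, ← mul_assoc,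
        map_mul, actB_bgen, phi_three, hf, hb]
    | _ :: _ :: _ :: _ :: _, h => simp only [List.length_cons] at h; omega
  | zero => rw [map_zero]
  | add x y _ _ h h' => rw [map_add, phi_add, phi_add, h, h']
  | smul c x _ h => rw [actB_smul, phi_smul, phi_smul, h]

lemma phi_sum {ι : Type*} (s : Finset ι) (f : ι → BoolPoly g) :
    phi hg1 (∑ i ∈ s, f i) = ∑ i ∈ s, phi hg1 (f i) :=
  map_sum (phiL hg1) f s

lemma phi_alpha (hodd : Odd g) (m : BoolPoly g) (hm : m ∈ BoolDeg g 1) :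
    phi hg1 (alphaElt g * m) = 0 := by
  rw [BoolDeg] at hm
  induction hm using Submodule.span_induction with
  | mem x hx =>
    obtain ⟨l, hl, rfl⟩ := hx
    match l, hl with
    | [], _ =>
      simp only [List.map_nil, List.prod_nil, mul_one, alphaElt]
      rw [phi_sum]
      exact Finset.sum_eq_zero fun i _ => phi_two hg1 _ _
    | [x], _ =>
      simp only [List.map_cons, List.map_nil, List.prod_cons, List.prod_nil, mul_one, alphaElt]
      rw [Finset.sum_mul, phi_sum]
      set b : VV g := bv (Sum.inr (lst hg1)) with hb
      have h1 : ∀ i : Fin g, phi hg1 (bgen (bv (Sum.inl i)) * bgen (bv (Sum.inr i)) * bgen x) =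
          symF x b + (symF x (bv (Sum.inl i)) * symF b (bv (Sum.inr i)) +
            symF x (bv (Sum.inr i)) * symF b (bv (Sum.inl i))) := by
        intro i
        rw [phi_three, symF_bv_bv, ← hb, symF_comm (bv (Sum.inr i)) x, symF_comm (bv (Sum.inl i)) b, symF_comm (bv (Sum.inr i)) b]
        simp only [Sum.swap_inr, if_true]
        ring
      simp only [bv] at h1 ⊢
      rw [Finset.sum_congr rfl fun i _ => h1 i, Finset.sum_add_distrib]
      have h2 := symF_expand x b
      simp only [bv] at h2
      rw [← h2, Finset.sum_const, Finset.card_univ, Fintype.card_fin]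
      obtain ⟨k, hk⟩ := hodd
      have hk' : (g : ZMod 2) = 2 * k + 1 := by exact_mod_cast congrArg (Nat.cast : ℕ → ZMod 2) hk
      rw [nsmul_eq_mul, hk']
      linear_combination (k + 1) * symF x b * two_zmod
    | _ :: _ :: _, h => simp only [List.length_cons] at h; omega
  | zero => rw [mul_zero, phi_zero]
  | add x y _ _ h h' => rw [mul_add, phi_add, h, h', add_zero]
  | smul c x _ h => rw [mul_smul_comm, phi_smul, h, mul_zero]

lemma NN_le_ker (hodd : Odd g) : NN hg1 ≤ LinearMap.ker (phiL hg1) := by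
  refine sup_le ?_ ?_
  · rw [coinvRel, Submodule.span_le]
    rintro _ ⟨f, hf, hfb, m, hm, rfl⟩
    rw [SetLike.mem_coe, LinearMap.mem_ker, map_sub, sub_eq_zero]
    exact phi_act hg1 f hf hfb m hm
  · rw [imgAlpha, Submodule.span_le]
    rintro _ ⟨m, hm, rfl⟩
    exact phi_alpha hg1 hodd m hm

lemma tt_notin (hodd : Odd g) (i : Fin g) (hi : i ≠ lst hg1) : tt hg1 i ∉ NN hg1 := by
  intro h
  have h2 : phi hg1 (tt hg1 i) = 0 := NN_le_ker hg1 hodd h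
  rw [tt, phi_three] at h2
  simp [symF_bv_bv, hi, Ne.symm hi] at h2

end lower

end S16

/-- for `g ≥ 4`, the `Sp(2g,ℤ/2ℤ)`-action descends to the cokernel
`B³_{g,0}` of `α · : B¹ → B³` (the form-preserving automorphisms preserve `α·B¹`),
and the coinvariant module `(B³_{g,0})_Γ̄` — the quotient of `B³` by
`coinvRel ⊔ imgAlpha` — is one-dimensional, generated by the image of `Ā₁B̄₁Ā_g`,
if `g` is odd, and zero if `g` is even. -/
theorem stmt16 (g : ℕ) (hg1 : 1 ≤ g) (hg : 4 ≤ g) :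
    (∀ (f : VV g ≃ₗ[ZMod 2] VV g) (hf : ∀ x y : VV g, symF (f x) (f y) = symF x y),
      ∀ b ∈ imgAlpha g, actB f hf b ∈ imgAlpha g) ∧
    (Odd g →
      (∀ m ∈ BoolDeg g 3, ∃ c : ZMod 2,
        m - c • (bgen (Pi.single (Sum.inl (⟨0, by omega⟩ : Fin g)) 1) *
          bgen (Pi.single (Sum.inr (⟨0, by omega⟩ : Fin g)) 1) *
          bgen (Pi.single (Sum.inl (⟨g - 1, by omega⟩ : Fin g)) 1))
          ∈ coinvRel g hg1 ⊔ imgAlpha g) ∧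
      (bgen (Pi.single (Sum.inl (⟨0, by omega⟩ : Fin g)) 1) *
          bgen (Pi.single (Sum.inr (⟨0, by omega⟩ : Fin g)) 1) *
          bgen (Pi.single (Sum.inl (⟨g - 1, by omega⟩ : Fin g)) 1)
          ∉ coinvRel g hg1 ⊔ imgAlpha g)) ∧
    (Even g → ∀ m ∈ BoolDeg g 3, m ∈ coinvRel g hg1 ⊔ imgAlpha g) := by
  have h0 : (⟨0, by omega⟩ : Fin g) ≠ S16.lst hg1 := by
    intro h
    have := congrArg Fin.val h
    simp only [S16.lst] at this
    omega
  refine ⟨S16.part1, fun hodd => ⟨fun m hm => ?_, S16.tt_notin hg1 hodd _ h0⟩, fun hev m hm => ?_⟩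
  · have h := S16.upper hg1 hg _ h0 hm
    obtain ⟨a, ha, b, hb, rfl⟩ := Submodule.mem_sup.mp h
    obtain ⟨c, rfl⟩ := Submodule.mem_span_singleton.mp hb
    refine ⟨c, ?_⟩
    have : a + c • S16.tt hg1 ⟨0, by omega⟩ - c • S16.tt hg1 ⟨0, by omega⟩ ∈ S16.NN hg1 := by
      rwa [add_sub_cancel_right]
    exact this
  · have h := S16.upper hg1 hg _ h0 hm
    have h2 := S16.even_tt hg1 hg hev _ h0
    rw [sup_eq_left.mpr ((Submodule.span_singleton_le_iff_mem _ _).mpr h2)] at h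
    exact h
end
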